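/- arXiv:2308.04752 — 3 statements merged into one kernel-verified Lean document; each statement's English description precedes it below -/
import Mathlib

section
/- The number of 4-regular partitions b_4(n) is odd if and only if n is a triangular number, i.e., b_4(n) ≡ 1 (mod 2) if and only if 8n+1 is an odd perfect square. -/
/-- `bReg k n` is the number of `k`-regular partitions of `n`,
i.e. partitions of `n` in which no part is divisible by `k`. -/
noncomputable def bReg (k n : ℕ) : ℕ :=
  (Finset.univ.filter fun p : n.Partition => ∀ i ∈ p.parts, ¬ k ∣ i).card

/-!
Write `f k = ∏ (1 - X ^ (k i))` over `i ≥ 1`, and let `ψ` be the sum of `X ^ t` over the triangular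
numbers `t`. The generating function of the `4`-regular partitions is `f 4 / f 1`, and modulo `2`
the Frobenius gives `f 4 = f 2 ^ 2`. Gauss' identity, proved here by Shanks' telescoping argument,
says that `ψ = f 2 ^ 2 / f 1` over every ring. Hence the generating function is `ψ` modulo `2`.
-/

open Filter Finset PowerSeries PowerSeries.WithPiTopology
open scoped Topology

/-- The `s`-th triangular number `0 + 1 + ⋯ + s`; the truncated division is exact. -/
def triangular (s : ℕ) : ℕ := s * (s + 1) / 2

theorem two_mul_triangular (s : ℕ) : 2 * triangular s = s * (s + 1) :=
  Nat.mul_div_cancel' (Nat.even_mul_succ_self s).two_dvd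

theorem triangular_injective : Function.Injective triangular := fun s t h => by
  have hs := two_mul_triangular s
  have ht := two_mul_triangular t
  rw [h] at hs
  nlinarith

theorem triangular_two_mul (n : ℕ) : triangular (2 * n) = n * (2 * n + 1) := by
  linarith [two_mul_triangular (2 * n)]

theorem triangular_two_mul_add_one (n : ℕ) :
    triangular (2 * n + 1) = n * (2 * n + 1) + (2 * n + 1) := by
  linarith [two_mul_triangular (2 * n + 1)]

theorem mem_range_triangular_iff (n : ℕ) :
    n ∈ Set.range triangular ↔ ∃ m : ℕ, Odd m ∧ m ^ 2 = 8 * n + 1 := by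
  have sq_eq (s : ℕ) : (2 * s + 1) ^ 2 = 8 * triangular s + 1 := by
    linarith [two_mul_triangular s]
  constructor
  · rintro ⟨s, rfl⟩
    exact ⟨2 * s + 1, odd_two_mul_add_one s, sq_eq s⟩
  · rintro ⟨_, ⟨s, rfl⟩, hs⟩
    exact ⟨s, by linarith [sq_eq s]⟩

section Shanks

variable {A : Type*} [CommRing A] (q : A)

/-- The `s`-th summand, for `s ≤ n`, of Shanks' finite form of Gauss' triangular number identity,
multiplied by the common denominator `∏ j < n, (1 - q ^ (2 j + 1))`. -/
def shanksTerm (n s : ℕ) : A :=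
  (∏ j ∈ range s, (1 - q ^ (2 * j + 1))) * (∏ j ∈ Ico s n, (1 - q ^ (2 * j + 2))) *
    q ^ (s * (2 * n + 1))

theorem shanksTerm_zero_right (n : ℕ) :
    shanksTerm q n 0 = ∏ j ∈ range n, (1 - q ^ (2 * j + 2)) := by
  simp [shanksTerm]

theorem shanksTerm_self (n : ℕ) :
    shanksTerm q n n = (∏ j ∈ range n, (1 - q ^ (2 * j + 1))) * q ^ (n * (2 * n + 1)) := by
  simp [shanksTerm]

theorem shanksTerm_succ_left {n s : ℕ} (hs : s ≤ n) :
    shanksTerm q (n + 1) s = (1 - q ^ (2 * n + 2)) * q ^ (2 * s) * shanksTerm q n s := by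
  rw [shanksTerm, shanksTerm, prod_Ico_succ_top hs]
  ring

theorem shanksTerm_succ_right {n s : ℕ} (hs : s < n) :
    (1 - q ^ (2 * s + 2)) * shanksTerm q n (s + 1) =
      (1 - q ^ (2 * s + 1)) * q ^ (2 * n + 1) * shanksTerm q n s := by
  rw [shanksTerm, shanksTerm, prod_range_succ, prod_eq_prod_Ico_succ_bot hs]
  ring

theorem sum_shanksTerm_succ_sub (n : ℕ) :
    ∑ s ∈ range n, (shanksTerm q (n + 1) s - (1 - q ^ (2 * n + 1)) * shanksTerm q n s) =
      (1 - q ^ (2 * n)) * shanksTerm q n n := by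
  let G (s : ℕ) : A := (1 - q ^ (2 * s)) * shanksTerm q n s
  calc
    _ = ∑ s ∈ range n, (G (s + 1) - G s) := sum_congr rfl fun s hs => by
      have hs := mem_range.mp hs
      simp only [G, shanksTerm_succ_left q hs.le, mul_add_one, shanksTerm_succ_right q hs]
      ring
    _ = (1 - q ^ (2 * n)) * shanksTerm q n n := by
      rw [sum_range_sub]
      simp [G]

theorem sum_shanksTerm (n : ℕ) :
    ∑ s ∈ range n, shanksTerm q n s =
      (∏ j ∈ range n, (1 - q ^ (2 * j + 1))) * ∑ s ∈ range (2 * n), q ^ triangular s := by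
  induction n with
  | zero => simp
  | succ n ih =>
    have telescoped := sum_shanksTerm_succ_sub q n
    rw [sum_sub_distrib, ← mul_sum, ih, sub_eq_iff_eq_add] at telescoped
    rw [sum_range_succ, telescoped, shanksTerm_succ_left q le_rfl, shanksTerm_self,
      prod_range_succ, mul_add_one 2 n, sum_range_succ _ (2 * n + 1), sum_range_succ _ (2 * n),
      triangular_two_mul, triangular_two_mul_add_one]
    ring

theorem X_pow_dvd_shanksTerm_succ (n s : ℕ) : (X : A⟦X⟧) ^ n ∣ shanksTerm X n (s + 1) :=
  (pow_dvd_pow X (by nlinarith)).mul_left _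

end Shanks

section Limits

variable {R : Type*} [TopologicalSpace R]

theorem tendsto_zero_of_X_pow_dvd [Semiring R] {g : ℕ → R⟦X⟧} (hg : ∀ n, X ^ n ∣ g n) :
    Tendsto g atTop (𝓝 0) := by
  rw [tendsto_iff_coeff_tendsto]
  refine fun d => tendsto_atTop_of_eventually_const (i₀ := d + 1) fun n hn => ?_
  rw [map_zero, X_pow_dvd_iff.mp (hg n) d hn]

theorem multipliable_one_sub_X_pow_of_tendsto_atTop [CommRing R] {e : ℕ → ℕ}
    (he : Tendsto e atTop atTop) : Multipliable fun i => (1 - X ^ e i : R⟦X⟧) := by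
  nontriviality R
  simp_rw [sub_eq_add_neg]
  apply multipliable_one_add_of_tendsto_order_atTop_nhds_top
  simp_rw [order_neg, order_X_pow]
  exact ENat.tendsto_natCast_nhds_top.comp he

open Classical in
theorem hasSum_X_pow_of_injective [Semiring R] {ι : Type*} {e : ι → ℕ}
    (he : Function.Injective e) :
    HasSum (fun i => (X ^ e i : R⟦X⟧)) (.mk fun n => if n ∈ Set.range e then 1 else 0) := by
  rw [hasSum_iff_hasSum_coeff]
  intro n
  simp only [coeff_X_pow, coeff_mk]
  split_ifs with hn
  · obtain ⟨i, rfl⟩ := hn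
    simpa only [he.eq_iff, eq_comm] using hasSum_ite_eq i (1 : R)
  · convert hasSum_zero with i
    exact if_neg fun h => hn ⟨i, h.symm⟩

end Limits

open Classical in
/-- The theta series `ψ = ∑ s, X ^ (s (s + 1) / 2)`, given by its coefficients so that it is
defined without a topology on `R`. -/
noncomputable def triangularSeries (R : Type*) [Semiring R] : R⟦X⟧ :=
  .mk fun n => if n ∈ Set.range triangular then 1 else 0

/-- The Euler product `f k = ∏ (1 - X ^ (k i))` over `i ≥ 1`; the index is shifted to start
at `0`. -/
noncomputable def eulerProduct (R : Type*) [CommRing R] [TopologicalSpace R] (k : ℕ) : R⟦X⟧ :=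
  ∏' i, (1 - X ^ (k * (i + 1)))

section GeneratingFunctions

variable (R : Type*) [CommRing R] [TopologicalSpace R]

theorem multipliable_one_sub_X_pow_mul {k : ℕ} (hk : 0 < k) :
    Multipliable fun i => (1 - X ^ (k * (i + 1)) : R⟦X⟧) :=
  multipliable_one_sub_X_pow_of_tendsto_atTop <|
    tendsto_atTop_mono (fun i => show i ≤ k * (i + 1) by nlinarith) tendsto_id

theorem multipliable_one_sub_X_pow_odd :
    Multipliable fun i => (1 - X ^ (2 * i + 1) : R⟦X⟧) :=
  multipliable_one_sub_X_pow_of_tendsto_atTop <|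
    tendsto_atTop_mono (fun i => show i ≤ 2 * i + 1 by lia) tendsto_id

variable [T2Space R] [IsTopologicalRing R]

theorem tprod_odd_mul_eulerProduct_two :
    (∏' i, (1 - X ^ (2 * i + 1) : R⟦X⟧)) * eulerProduct R 2 = eulerProduct R 1 := by
  have odd_succ (i : ℕ) : 2 * i + 1 + 1 = 2 * (i + 1) := rfl
  have split := tprod_even_mul_odd (f := fun i => (1 - X ^ (i + 1) : R⟦X⟧))
    (multipliable_one_sub_X_pow_odd R)
    (by simpa only [odd_succ] using multipliable_one_sub_X_pow_mul R two_pos)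
  simpa only [eulerProduct, one_mul, odd_succ] using split

theorem tprod_odd_mul_triangularSeries :
    (∏' i, (1 - X ^ (2 * i + 1) : R⟦X⟧)) * triangularSeries R = eulerProduct R 2 := by
  have tendsto_left : Tendsto
      (fun n => (∏ i ∈ range n, (1 - X ^ (2 * i + 1) : R⟦X⟧)) *
        ∑ s ∈ range (2 * n), X ^ triangular s)
      atTop (𝓝 ((∏' i, (1 - X ^ (2 * i + 1))) * triangularSeries R)) :=
    (multipliable_one_sub_X_pow_odd R).tendsto_prod_tprod_nat.mul <|
      (hasSum_X_pow_of_injective triangular_injective).tendsto_sum_nat.comp <|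
        tendsto_id.const_mul_atTop' two_pos
  -- Only the summand `s = 0` of Shanks' identity survives in the limit.
  have tendsto_right : Tendsto (fun n => ∑ s ∈ range (n + 1), shanksTerm (X : R⟦X⟧) (n + 1) s)
      atTop (𝓝 (eulerProduct R 2)) := by
    have tail : Tendsto (fun n => ∑ s ∈ range n, shanksTerm (X : R⟦X⟧) (n + 1) (s + 1))
        atTop (𝓝 0) :=
      tendsto_zero_of_X_pow_dvd fun n => dvd_sum fun s _ =>
        (pow_dvd_pow X n.le_succ).trans (X_pow_dvd_shanksTerm_succ (n + 1) s)
    have head : Tendsto (fun n => shanksTerm (X : R⟦X⟧) (n + 1) 0) atTop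
        (𝓝 (eulerProduct R 2)) := by
      simp only [shanksTerm_zero_right]
      exact (tendsto_add_atTop_iff_nat 1).mpr
        (multipliable_one_sub_X_pow_mul R two_pos).tendsto_prod_tprod_nat
    simpa only [sum_range_succ', zero_add] using tail.add head
  simp only [← sum_shanksTerm] at tendsto_left
  exact tendsto_nhds_unique tendsto_left ((tendsto_add_atTop_iff_nat 1).mp tendsto_right)

/-- **Gauss' triangular number identity**. -/
theorem triangularSeries_mul_eulerProduct_one :
    triangularSeries R * eulerProduct R 1 = eulerProduct R 2 ^ 2 := by
  rw [← tprod_odd_mul_eulerProduct_two, sq, ← tprod_odd_mul_triangularSeries]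
  ring

theorem powerSeriesMk_bReg_mul_eulerProduct_one {k : ℕ} (hk : 0 < k) :
    PowerSeries.mk (fun n => (bReg k n : R)) * eulerProduct R 1 = eulerProduct R k := by
  have bReg_eq (n : ℕ) : bReg k n = #(Nat.Partition.countRestricted n k) :=
    Nat.Partition.card_restricted_eq_card_countRestricted n hk
  simp only [bReg_eq, Nat.Partition.powerSeriesMk_card_countRestricted_eq_tprod R hk,
    eulerProduct]
  rw [← (Nat.Partition.multipliable_powerSeriesMk_card_countRestricted R k).tprod_mul
    (multipliable_one_sub_X_pow_mul R one_pos)]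
  refine tprod_congr fun i => ?_
  simp_rw [one_mul, mul_comm k, pow_mul, geom_sum_mul_neg]

theorem eulerProduct_pow_char (p : ℕ) [Fact p.Prime] [CharP R p] {k : ℕ} (hk : 0 < k) :
    eulerProduct R k ^ p = eulerProduct R (k * p) := by
  have : CharP R⟦X⟧ p := charP_of_injective_ringHom C_injective p
  rw [eulerProduct, ← (multipliable_one_sub_X_pow_mul R hk).tprod_pow]
  refine tprod_congr fun i => ?_
  rw [sub_pow_char, one_pow, ← pow_mul, mul_right_comm]

end GeneratingFunctions

theorem powerSeriesMk_bReg_four_eq_triangularSeries :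
    PowerSeries.mk (fun n => (bReg 4 n : ZMod 2)) = triangularSeries (ZMod 2) := by
  have eulerProduct_one_ne_zero : eulerProduct (ZMod 2) 1 ≠ 0 := by
    simpa only [eulerProduct, one_mul] using tprod_one_sub_X_pow_ne_zero (ZMod 2)
  apply mul_right_cancel₀ eulerProduct_one_ne_zero
  rw [powerSeriesMk_bReg_mul_eulerProduct_one _ four_pos, triangularSeries_mul_eulerProduct_one,
    eulerProduct_pow_char _ 2 two_pos, show 2 * 2 = 4 from rfl]

/-- `b_4(n)` is odd if and only if `8n+1` is an odd perfect square. -/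
theorem b4_odd_iff (n : ℕ) :
    bReg 4 n % 2 = 1 ↔ ∃ m : ℕ, Odd m ∧ m ^ 2 = 8 * n + 1 := by
  classical
  have bReg_cast : (bReg 4 n : ZMod 2) = if n ∈ Set.range triangular then 1 else 0 := by
    simpa only [triangularSeries, coeff_mk] using
      congrArg (coeff n) powerSeriesMk_bReg_four_eq_triangularSeries
  rw [← mem_range_triangular_iff, ← Nat.odd_iff, ← ZMod.natCast_eq_one_iff_odd, bReg_cast]
  simp
end

section
/- If l is a prime with l ≡ 13, 17, 19, or 23 (mod 24), then b_4(3l(ln+j) + (l^2-1)/8) ≡ 0 (mod 3) for every nonnegative integer n and every j with 1 ≤ j ≤ l-1. -/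
/-!
Write `B(q) = ∑ b₄(n) qⁿ`. Gauss's product for `ψ` gives `B(q) ψ(-q) = ψ(q²)`, which becomes
`B(q) φ(-q) = ψ(-q)` through `ψ(q)² = φ(q) ψ(q²)`. Rotation by a third of a turn acts freely on
the nonzero vectors of the hexagonal lattice, so its theta function
`φ(q) φ(q³) + 4 q ψ(q²) ψ(q⁶)` is `1` modulo `3`; by Frobenius this reads
`φ(q)⁴ + q ψ(q²)⁴ ≡ 1`. At `-q`, with `φ = φ(-q)` and `ψ = ψ(-q)`, the three identities combine to
`φ⁶ B ≡ φ⁹ ψ - q ψ⁹ φ`. Atkin's operator `U₃` pulls cubes out and kills `q φ`, as no square is `2`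
modulo `3`, which leaves `U₃ B ≡ φ · U₃ ψ`.

Hence `3 ∤ b₄(3k)` forces `24 k + 1 = x² + 6 (2y)²`. For the indices in question `24 k + 1` is
divisible by `l` exactly once, whereas `-6` is a nonresidue modulo `l`, so `l` divides a value of
`x² + 6 y²` only if `l²` does.
-/

namespace RegularPartition

open Filter PowerSeries
open scoped PowerSeries.WithPiTopology

section Convergence

variable {R : Type*} [CommRing R] {ι κ : Type*}

theorem tendsto_fst_add_snd_cofinite_atTop {e : ι → ℕ} {e' : κ → ℕ}
    (he : Tendsto e cofinite atTop) (he' : Tendsto e' cofinite atTop) :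
    Tendsto (fun x : ι × κ ↦ e x.1 + e' x.2) cofinite atTop := by
  refine tendsto_atTop.mpr fun n ↦ eventually_cofinite.mpr ?_
  refine ((eventually_cofinite.mp (he.eventually_ge_atTop n)).prod
    (eventually_cofinite.mp (he'.eventually_ge_atTop n))).subset ?_
  rintro ⟨i, j⟩ hij
  simp only [Set.mem_ofPred_eq, not_le, Set.mem_prod] at hij ⊢
  omega

theorem X_pow_dvd_pow {q : R⟦X⟧} (hq : constantCoeff q = 0) (n : ℕ) : X ^ n ∣ q ^ n :=
  pow_dvd_pow_of_dvd (X_dvd_iff.mpr hq) n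

variable [TopologicalSpace R]

theorem summable_of_X_pow_dvd {e : ι → ℕ} (he : Tendsto e cofinite atTop) {f : ι → R⟦X⟧}
    (hf : ∀ i, X ^ e i ∣ f i) : Summable f := by
  refine (PowerSeries.WithPiTopology.summable_iff_summable_coeff R).mpr fun n ↦
    summable_of_hasFiniteSupport ?_
  refine (eventually_cofinite.mp (he.eventually_gt_atTop n)).subset fun i hi hlt ↦ hi ?_
  exact X_pow_dvd_iff.mp (hf i) n hlt

theorem summable_pow {q : R⟦X⟧} (hq : constantCoeff q = 0) {e : ι → ℕ}
    (he : Tendsto e cofinite atTop) : Summable fun i ↦ q ^ e i :=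
  summable_of_X_pow_dvd he fun i ↦ X_pow_dvd_pow hq (e i)

theorem hasSum_pow_mul_pow [IsTopologicalRing R] [T2Space R] {q r : R⟦X⟧}
    (hq : constantCoeff q = 0) (hr : constantCoeff r = 0) {e : ι → ℕ} {e' : κ → ℕ}
    (he : Tendsto e cofinite atTop) (he' : Tendsto e' cofinite atTop) :
    HasSum (fun x : ι × κ ↦ q ^ e x.1 * r ^ e' x.2) ((∑' i, q ^ e i) * ∑' j, r ^ e' j) := by
  have hdvd (x : ι × κ) : X ^ (e x.1 + e' x.2) ∣ q ^ e x.1 * r ^ e' x.2 := by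
    rw [pow_add]
    exact mul_dvd_mul (X_pow_dvd_pow hq _) (X_pow_dvd_pow hr _)
  exact HasSum.mul (f := fun i ↦ q ^ e i) (g := fun j ↦ r ^ e' j) (summable_pow hq he).hasSum
    (summable_pow hr he').hasSum
    (summable_of_X_pow_dvd (tendsto_fst_add_snd_cofinite_atTop he he') hdvd)

theorem multipliable_one_sub_pow {q : R⟦X⟧} (hq : constantCoeff q = 0) {e : ℕ → ℕ}
    (he : StrictMono e) : Multipliable fun k ↦ 1 - q ^ e k := by
  simp only [sub_eq_add_neg]
  refine PowerSeries.WithPiTopology.multipliable_one_add_of_tendsto_order_atTop_nhds_top R ?_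
  rw [ENat.tendsto_nhds_top_iff_natCast_lt]
  refine fun n ↦ (he.tendsto_atTop.eventually_gt_atTop n).mono fun k hk ↦ ?_
  rw [order_neg]
  exact (Nat.cast_lt.mpr hk).trans_le
    (nat_le_order _ _ (X_pow_dvd_iff.mp (X_pow_dvd_pow hq (e k))))

end Convergence

section Exponents

/-- The `n`-th triangular number. -/
def triangular (n : ℕ) : ℕ := n * (n + 1) / 2

theorem two_mul_triangular (n : ℕ) : 2 * triangular n = n * (n + 1) :=
  Nat.mul_div_cancel' (Nat.even_mul_succ_self n).two_dvd

theorem triangular_succ (n : ℕ) : triangular (n + 1) = triangular n + (n + 1) := by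
  linarith [two_mul_triangular n, two_mul_triangular (n + 1)]

/-- The symmetry `m ↔ -1 - m` of the polynomial `m (m + 1) / 2` folds `ℤ` two-to-one onto `ℕ`. -/
def triangularIndex (m : ℤ) : ℕ := (max m (-1 - m)).toNat

theorem two_mul_triangular_triangularIndex (m : ℤ) :
    (2 * triangular (triangularIndex m) : ℤ) = m * (m + 1) := by
  have h : (triangularIndex m : ℤ) = m ∨ (triangularIndex m : ℤ) = -1 - m := by
    unfold triangularIndex
    omega
  have h2 : (2 * triangular (triangularIndex m) : ℤ) =
      triangularIndex m * (triangularIndex m + 1) := mod_cast two_mul_triangular _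
  rcases h with h | h
  · rw [h2, h]
  · rw [h2, h]
    ring

/-- The norm form of the hexagonal lattice. -/
def hexNorm (x : ℤ × ℤ) : ℕ := (x.1 ^ 2 + x.1 * x.2 + x.2 ^ 2).toNat

theorem coe_hexNorm (x : ℤ × ℤ) : (hexNorm x : ℤ) = x.1 ^ 2 + x.1 * x.2 + x.2 ^ 2 :=
  Int.toNat_of_nonneg (by nlinarith [sq_nonneg (2 * x.1 + x.2), sq_nonneg x.2])

theorem le_triangular (n : ℕ) : n ≤ triangular n := by
  nlinarith [two_mul_triangular n, Nat.le_mul_self n]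

theorem tendsto_triangular : Tendsto triangular cofinite atTop := by
  rw [Nat.cofinite_eq_atTop]
  exact tendsto_atTop_mono le_triangular tendsto_id

theorem tendsto_triangular_triangularIndex :
    Tendsto (fun m ↦ triangular (triangularIndex m)) cofinite atTop := by
  refine tendsto_atTop.mpr fun b ↦ eventually_cofinite.mpr <|
    (Set.finite_Icc (-b - 1 : ℤ) b).subset fun m hm ↦ ?_
  have hlt : triangularIndex m < b := (le_triangular _).trans_lt (not_le.mp hm)
  unfold triangularIndex at hlt
  simp only [Set.mem_Icc]
  omega

theorem tendsto_natAbs_sq : Tendsto (fun n : ℤ ↦ n.natAbs ^ 2) cofinite atTop := by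
  refine tendsto_atTop.mpr fun b ↦ eventually_cofinite.mpr <|
    (Set.finite_Icc (-b : ℤ) b).subset fun n hn ↦ ?_
  have : n.natAbs < b := by
    have := Nat.le_self_pow two_ne_zero n.natAbs
    simp only [Set.mem_ofPred_eq, not_le] at hn
    omega
  simp only [Set.mem_Icc]
  omega

theorem tendsto_hexNorm : Tendsto hexNorm cofinite atTop := by
  refine tendsto_atTop.mpr fun b ↦ eventually_cofinite.mpr <|
    (Set.finite_Icc ((-2 * b, -2 * b) : ℤ × ℤ) (2 * b, 2 * b)).subset fun x hx ↦ ?_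
  simp only [Set.mem_ofPred_eq, not_le] at hx
  zify at hx
  rw [coe_hexNorm] at hx
  simp only [Set.mem_Icc, Prod.le_def]
  refine ⟨⟨?_, ?_⟩, ?_, ?_⟩ <;>
  nlinarith [sq_nonneg (2 * x.1 + x.2), sq_nonneg (x.1 + 2 * x.2), sq_nonneg (x.1 + 1),
    sq_nonneg (x.1 - 1), sq_nonneg (x.2 + 1), sq_nonneg (x.2 - 1)]

end Exponents

section Theta

variable {R : Type*} [CommRing R] [TopologicalSpace R] {q : R⟦X⟧}

/-- Ramanujan's theta function `φ(q)`, with a power series in place of the nome. -/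
noncomputable def thetaPhi (q : R⟦X⟧) : R⟦X⟧ := ∑' n : ℤ, q ^ n.natAbs ^ 2

/-- Ramanujan's theta function `ψ(q)`, with a power series in place of the nome. -/
noncomputable def thetaPsi (q : R⟦X⟧) : R⟦X⟧ := ∑' n, q ^ triangular n

/-- The theta function of the hexagonal lattice (the Borweins' `a(q)`). -/
noncomputable def thetaHex (q : R⟦X⟧) : R⟦X⟧ := ∑' x, q ^ hexNorm x

theorem hasSum_thetaPhi (hq : constantCoeff q = 0) :
    HasSum (fun n : ℤ ↦ q ^ n.natAbs ^ 2) (thetaPhi q) :=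
  (summable_pow hq tendsto_natAbs_sq).hasSum

theorem hasSum_thetaPsi (hq : constantCoeff q = 0) :
    HasSum (fun n ↦ q ^ triangular n) (thetaPsi q) :=
  (summable_pow hq tendsto_triangular).hasSum

theorem hasSum_thetaHex (hq : constantCoeff q = 0) :
    HasSum (fun x ↦ q ^ hexNorm x) (thetaHex q) :=
  (summable_pow hq tendsto_hexNorm).hasSum

theorem bijective_triangularIndex_add_sub :
    Function.Bijective fun x : ℤ × ℕ ↦
      (triangularIndex (x.2 + x.1), triangularIndex (x.2 - x.1)) := by
  unfold triangularIndex
  constructor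
  · rintro ⟨t, c⟩ ⟨t', c'⟩ h
    simp only [Prod.mk.injEq] at h ⊢
    omega
  · rintro ⟨a, b⟩
    have h : (a + b : ℤ) % 2 = 0 ∨ (a + b : ℤ) % 2 = 1 ∧ (b : ℤ) < a ∨
        (a + b : ℤ) % 2 = 1 ∧ (a : ℤ) < b := by omega
    rcases h with h | h | h
    · exact ⟨((a - b) / 2, (a + b) / 2), by ext <;> dsimp only <;> omega⟩
    · exact ⟨((a + b + 1) / 2, (a - b - 1) / 2), by ext <;> dsimp only <;> omega⟩
    · exact ⟨(-((a + b + 1) / 2), (b - a - 1) / 2), by ext <;> dsimp only <;> omega⟩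

theorem triangular_add_triangular (t : ℤ) (c : ℕ) :
    triangular (triangularIndex (c + t)) + triangular (triangularIndex (c - t)) =
      t.natAbs ^ 2 + 2 * triangular c := by
  have h : (2 * triangular c : ℤ) = c * (c + 1) := mod_cast two_mul_triangular c
  zify
  rw [sq_abs]
  linarith [two_mul_triangular_triangularIndex (c + t), two_mul_triangular_triangularIndex (c - t)]

variable [IsTopologicalRing R]

theorem hasSum_triangularIndex (hq : constantCoeff q = 0) :
    HasSum (fun m ↦ q ^ triangular (triangularIndex m)) (2 * thetaPsi q) := by
  rw [two_mul]
  have h := hasSum_thetaPsi hq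
  refine HasSum.of_nat_of_neg_add_one (h.congr_fun fun n ↦ ?_) (h.congr_fun fun n ↦ ?_) <;>
  · unfold triangularIndex
    congr 2
    omega

variable [T2Space R]

theorem thetaPsi_sq (hq : constantCoeff q = 0) :
    thetaPsi q ^ 2 = thetaPhi q * thetaPsi (q ^ 2) := by
  have hq2 : constantCoeff (q ^ 2) = 0 := by simp [hq]
  have h := hasSum_pow_mul_pow hq hq tendsto_triangular tendsto_triangular
  rw [← (Equiv.ofBijective _ bijective_triangularIndex_add_sub).hasSum_iff] at h
  rw [sq]
  refine h.unique ((hasSum_pow_mul_pow hq hq2 tendsto_natAbs_sq tendsto_triangular).congr_fun ?_)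
  rintro ⟨t, c⟩
  simp only [Function.comp_apply, Equiv.ofBijective_apply]
  rw [← pow_add, triangular_add_triangular, ← pow_mul, pow_add]

theorem bijective_hexSplit :
    Function.Bijective (Sum.elim (fun x : ℤ × ℤ ↦ (x.1 - x.2, 2 * x.2))
      fun x : ℤ × ℤ ↦ (x.1 - x.2, 2 * x.2 + 1)) := by
  constructor
  · rintro (⟨c, d⟩ | ⟨c, d⟩) (⟨c', d'⟩ | ⟨c', d'⟩) h <;>
    simp only [Sum.elim_inl, Sum.elim_inr, Prod.mk.injEq, Sum.inl.injEq, Sum.inr.injEq,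
      reduceCtorEq] at h ⊢ <;>
    omega
  · rintro ⟨a, b⟩
    rcases Int.even_or_odd' b with ⟨d, rfl | rfl⟩
    · exact ⟨.inl (a + d, d), by simp⟩
    · exact ⟨.inr (a + d, d), by simp⟩

theorem hexNorm_sub_two_mul (c d : ℤ) :
    hexNorm (c - d, 2 * d) = c.natAbs ^ 2 + 3 * d.natAbs ^ 2 := by
  zify
  rw [coe_hexNorm, sq_abs, sq_abs]
  ring

theorem hexNorm_sub_two_mul_add_one (c d : ℤ) :
    hexNorm (c - d, 2 * d + 1) =
      1 + (2 * triangular (triangularIndex c) + 6 * triangular (triangularIndex d)) := by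
  zify
  rw [coe_hexNorm]
  linear_combination -two_mul_triangular_triangularIndex c -
    3 * two_mul_triangular_triangularIndex d

theorem thetaHex_eq (hq : constantCoeff q = 0) :
    thetaHex q =
      thetaPhi q * thetaPhi (q ^ 3) + 4 * q * thetaPsi (q ^ 2) * thetaPsi (q ^ 6) := by
  have hpow {k : ℕ} (hk : k ≠ 0) : constantCoeff (q ^ k) = 0 := by simp [hq, hk]
  have hodd := (hasSum_pow_mul_pow (hpow two_ne_zero) (hpow (k := 6) (by norm_num))
    tendsto_triangular_triangularIndex tendsto_triangular_triangularIndex).mul_left q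
  rw [(hasSum_triangularIndex (hpow two_ne_zero)).tsum_eq,
    (hasSum_triangularIndex (hpow (by norm_num))).tsum_eq] at hodd
  have heven := hasSum_pow_mul_pow hq (hpow three_ne_zero) tendsto_natAbs_sq tendsto_natAbs_sq
  have h := (Equiv.ofBijective _ bijective_hexSplit).hasSum_iff.mpr (hasSum_thetaHex hq)
  rw [h.unique ((heven.congr_fun fun x ↦ ?_).sum (hodd.congr_fun fun x ↦ ?_))]
  · simp only [thetaPhi]
    ring
  · simp [hexNorm_sub_two_mul, pow_add, pow_mul]
  · simp [hexNorm_sub_two_mul_add_one, pow_add, pow_mul]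

/-- Rotation of the hexagonal lattice by a third of a turn. -/
def hexRotation : ℤ × ℤ ≃ ℤ × ℤ where
  toFun x := (x.2, -x.1 - x.2)
  invFun x := (-x.1 - x.2, x.1)
  left_inv x := Prod.ext (by dsimp only; ring) rfl
  right_inv x := Prod.ext rfl (by dsimp only; ring)

/-- A fundamental domain for `hexRotation` on the nonzero vectors: two opposite sectors. -/
def hexSector : Set (ℤ × ℤ) := {x | 0 < x.1 ∧ 0 ≤ x.2 ∨ x.1 < 0 ∧ x.2 ≤ 0}

theorem hexNorm_hexRotation (x : ℤ × ℤ) : hexNorm (hexRotation x) = hexNorm x := by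
  zify
  simp only [coe_hexNorm, hexRotation, Equiv.coe_fn_mk]
  ring

theorem hexSector_trichotomy {x : ℤ × ℤ} (hx : x ≠ 0) :
    (x ∈ hexSector ∧ hexRotation x ∉ hexSector ∧ hexRotation (hexRotation x) ∉ hexSector) ∨
      (x ∉ hexSector ∧ hexRotation x ∈ hexSector ∧ hexRotation (hexRotation x) ∉ hexSector) ∨
      (x ∉ hexSector ∧ hexRotation x ∉ hexSector ∧ hexRotation (hexRotation x) ∈ hexSector) := by
  simp only [ne_eq, Prod.ext_iff, Prod.fst_zero, Prod.snd_zero, hexSector, hexRotation,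
    Set.mem_ofPred_eq, Equiv.coe_fn_mk] at hx ⊢
  omega

theorem three_dvd_thetaHex_sub_one (hq : constantCoeff q = 0) : 3 ∣ thetaHex q - 1 := by
  classical
  let g : ℤ × ℤ → R⟦X⟧ := hexSector.indicator fun x ↦ q ^ hexNorm x
  have hg : Summable g := summable_of_X_pow_dvd tendsto_hexNorm fun x ↦ by
    by_cases hx : x ∈ hexSector <;> simp [g, hx, X_pow_dvd_pow hq]
  have hρ := hexRotation.hasSum_iff.mpr hg.hasSum
  have hsum := (hasSum_ite_eq (0 : ℤ × ℤ) (1 : R⟦X⟧)).add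
    ((hg.hasSum.add hρ).add (hexRotation.hasSum_iff.mpr hρ))
  rw [(hasSum_thetaHex hq).unique (hsum.congr_fun fun x ↦ ?_)]
  · exact ⟨∑' x, g x, by ring⟩
  · simp only [g, Function.comp_apply, Set.indicator_apply, hexNorm_hexRotation]
    by_cases hx : x = 0
    · simp [hx, hexNorm, hexSector, hexRotation]
    · rcases hexSector_trichotomy hx with h | h | h <;> simp [h, hx]

end Theta

section Frobenius

variable {R : Type*} [CommRing R]

theorem charP_powerSeries (p : ℕ) [CharP R p] : CharP R⟦X⟧ p :=
  charP_of_injective_algebraMap (R := R) C_injective p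

variable [TopologicalSpace R] [IsTopologicalRing R] [T2Space R] {q : R⟦X⟧}

theorem tsum_pow_char (p : ℕ) [Fact p.Prime] [CharP R p] {ι : Type*} {f : ι → R⟦X⟧}
    (hf : Summable f) : (∑' i, f i) ^ p = ∑' i, f i ^ p :=
  have := charP_powerSeries (R := R) p
  (hf.hasSum.map (frobenius R⟦X⟧ p) (continuous_pow p)).tsum_eq.symm

theorem thetaPhi_pow_char (p : ℕ) [Fact p.Prime] [CharP R p] (hq : constantCoeff q = 0) :
    thetaPhi q ^ p = thetaPhi (q ^ p) := by
  rw [thetaPhi, tsum_pow_char p (hasSum_thetaPhi hq).summable]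
  exact tsum_congr fun n ↦ pow_right_comm q _ p

theorem thetaPsi_pow_char (p : ℕ) [Fact p.Prime] [CharP R p] (hq : constantCoeff q = 0) :
    thetaPsi q ^ p = thetaPsi (q ^ p) := by
  rw [thetaPsi, tsum_pow_char p (hasSum_thetaPsi hq).summable]
  exact tsum_congr fun n ↦ pow_right_comm q _ p

theorem thetaPhi_pow_four_add [CharP R 3] (hq : constantCoeff q = 0) :
    thetaPhi q ^ 4 + q * thetaPsi (q ^ 2) ^ 4 = 1 := by
  have := charP_powerSeries (R := R) 3
  have three_eq_zero : (3 : R⟦X⟧) = 0 := CharP.ofNat_eq_zero R⟦X⟧ 3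
  have hhex : thetaHex q - 1 = 0 := by
    simpa [three_eq_zero] using three_dvd_thetaHex_sub_one hq
  have hφ : thetaPhi (q ^ 3) = thetaPhi q ^ 3 := (thetaPhi_pow_char 3 hq).symm
  have hψ : thetaPsi (q ^ 6) = thetaPsi (q ^ 2) ^ 3 := by
    rw [thetaPsi_pow_char 3 (by simp [hq]), ← pow_mul]
  rw [thetaHex_eq hq, hφ, hψ] at hhex
  linear_combination hhex - q * thetaPsi (q ^ 2) ^ 4 * three_eq_zero

end Frobenius

section ShanksIdentity

open Finset

variable {R : Type*} [CommRing R]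

/-- The summand of Shanks' finite form of Gauss's identity for `ψ`. -/
def shanksTerm (q : R) (n s : ℕ) : R :=
  (∏ k ∈ Ico s n, (1 - q ^ (2 * (k + 1)))) * (∏ k ∈ range s, (1 - q ^ (2 * k + 1))) *
    q ^ (s * (2 * n + 1))

theorem sum_range_shanksTerm_succ (q : R) {n j : ℕ} (hj : j ≤ n) :
    ∑ s ∈ range j, shanksTerm q (n + 1) s =
      (1 - q ^ (2 * n + 1)) * ∑ s ∈ range j, shanksTerm q n s +
        (1 - q ^ (2 * j)) * shanksTerm q n j := by
  induction j with
  | zero => simp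
  | succ j ih =>
    rw [sum_range_succ, sum_range_succ, ih (by omega)]
    simp only [shanksTerm]
    rw [prod_Ico_succ_top (by omega : j ≤ n), prod_eq_prod_Ico_succ_bot (by omega : j < n),
      prod_range_succ]
    ring

theorem sum_shanksTerm (q : R) (n : ℕ) :
    ∑ s ∈ range n, shanksTerm q n s =
      (∏ k ∈ range n, (1 - q ^ (2 * k + 1))) * ∑ s ∈ range (2 * n), q ^ triangular s := by
  induction n with
  | zero => simp
  | succ n ih =>
    have htri : triangular (2 * n) = n * (2 * n + 1) := by linarith [two_mul_triangular (2 * n)]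
    rw [sum_range_succ, sum_range_shanksTerm_succ q le_rfl, ih, mul_add_one, sum_range_succ,
      sum_range_succ, triangular_succ, htri, prod_range_succ]
    simp only [shanksTerm, Ico_self, prod_empty, Nat.Ico_succ_singleton, prod_singleton]
    ring

theorem pow_dvd_prod_mul_sum_sub_prod (q : R) (n : ℕ) :
    q ^ n ∣ (∏ k ∈ range n, (1 - q ^ (2 * k + 1))) * ∑ s ∈ range (2 * n), q ^ triangular s -
      ∏ k ∈ range n, (1 - q ^ (2 * (k + 1))) := by
  rw [← sum_shanksTerm]
  cases n with
  | zero => simp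
  | succ n =>
    have hterm : shanksTerm q (n + 1) 0 = ∏ k ∈ range (n + 1), (1 - q ^ (2 * (k + 1))) := by
      simp [shanksTerm, Nat.Ico_zero_eq_range]
    rw [sum_range_succ', hterm, add_sub_cancel_right]
    refine dvd_sum fun s _ ↦ Dvd.dvd.mul_left (pow_dvd_pow q ?_) _
    nlinarith

end ShanksIdentity

section Products

variable {R : Type*} [CommRing R] [TopologicalSpace R] {q : R⟦X⟧}

/-- Euler's product `(q; q)_∞`. -/
noncomputable def eulerProd (q : R⟦X⟧) : R⟦X⟧ := ∏' k, (1 - q ^ (k + 1))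

/-- The product `(q; q²)_∞` over odd exponents. -/
noncomputable def oddProd (q : R⟦X⟧) : R⟦X⟧ := ∏' k, (1 - q ^ (2 * k + 1))

theorem multipliable_oddProd (hq : constantCoeff q = 0) :
    Multipliable fun k ↦ 1 - q ^ (2 * k + 1) :=
  multipliable_one_sub_pow hq fun _ _ h ↦ by omega

theorem multipliable_eulerProd_sq (hq : constantCoeff q = 0) :
    Multipliable fun k ↦ 1 - q ^ (2 * (k + 1)) :=
  multipliable_one_sub_pow hq fun _ _ h ↦ by omega

theorem eulerProd_sq (q : R⟦X⟧) : eulerProd (q ^ 2) = ∏' k, (1 - q ^ (2 * (k + 1))) := by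
  simp only [eulerProd, pow_mul]

variable [IsTopologicalRing R] [T2Space R]

theorem oddProd_mul_eulerProd_sq (hq : constantCoeff q = 0) :
    oddProd q * eulerProd (q ^ 2) = eulerProd q := by
  rw [eulerProd_sq]
  exact tprod_even_mul_odd (f := fun k ↦ 1 - q ^ (k + 1)) (multipliable_oddProd hq)
    (multipliable_eulerProd_sq hq)

theorem oddProd_mul_oddProd_neg (hq : constantCoeff q = 0) :
    oddProd q * oddProd (-q) = oddProd (q ^ 2) := by
  rw [oddProd, oddProd, ← (multipliable_oddProd hq).tprod_mul
    (multipliable_oddProd (by simp [hq]))]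
  refine tprod_congr fun k ↦ ?_
  rw [Odd.neg_pow ⟨k, rfl⟩]
  ring

theorem oddProd_mul_thetaPsi (hq : constantCoeff q = 0) :
    oddProd q * thetaPsi q = eulerProd (q ^ 2) := by
  have hlim := ((multipliable_oddProd hq).hasProd.tendsto_prod_nat.mul
    ((hasSum_thetaPsi hq).tendsto_sum_nat.comp (tendsto_id.const_mul_atTop' two_pos))).sub
      (multipliable_eulerProd_sq hq).hasProd.tendsto_prod_nat
  have hzero := (summable_of_X_pow_dvd (Nat.cofinite_eq_atTop ▸ tendsto_id) fun n ↦
    (X_pow_dvd_pow hq n).trans (pow_dvd_prod_mul_sum_sub_prod q n)).tendsto_atTop_zero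
  rw [eulerProd_sq]
  exact sub_eq_zero.mp (tendsto_nhds_unique hlim hzero)

end Products

section GeneratingFunction

variable (R : Type*) [CommRing R] [TopologicalSpace R] [IsTopologicalRing R] [T2Space R]

theorem mk_bReg_mul_eulerProd {m : ℕ} (hm : 0 < m) :
    PowerSeries.mk (fun n ↦ (bReg m n : R)) * eulerProd X = eulerProd (X ^ m) := by
  have hmk : PowerSeries.mk (fun n ↦ (bReg m n : R)) =
      ∏' i, ∑ j ∈ Finset.range m, X ^ ((i + 1) * j) := by
    rw [← Nat.Partition.powerSeriesMk_card_countRestricted_eq_tprod R hm]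
    ext n
    rw [coeff_mk, coeff_mk, ← Nat.Partition.card_restricted_eq_card_countRestricted n hm]
    rfl
  rw [hmk, eulerProd, eulerProd,
    ← (Nat.Partition.multipliable_powerSeriesMk_card_countRestricted R m).tprod_mul
      (PowerSeries.WithPiTopology.multipliable_one_sub_X_pow R)]
  refine tprod_congr fun k ↦ ?_
  simp only [pow_mul]
  rw [geom_sum_mul_neg, pow_right_comm]

end GeneratingFunction

section Dissection

open Finset (mem_map sum_subset sum_map)
open Finset.HasAntidiagonal (antidiagonal mem_antidiagonal)

/-- Atkin's operator `U_p`, extracting the coefficients whose index is divisible by `p`. -/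
noncomputable def atkinU {R : Type*} [Semiring R] (p : ℕ) : R⟦X⟧ →ₗ[R] R⟦X⟧ where
  toFun f := PowerSeries.mk fun n ↦ coeff (p * n) f
  map_add' f g := by ext; simp
  map_smul' c f := by ext; simp

@[simp]
theorem coeff_atkinU {R : Type*} [Semiring R] (p n : ℕ) (f : R⟦X⟧) :
    coeff n (atkinU p f) = coeff (p * n) f :=
  coeff_mk n fun k ↦ coeff (p * k) f

theorem atkinU_expand_mul {R : Type*} [CommRing R] (p : ℕ) (hp : p ≠ 0) (f g : R⟦X⟧) :
    atkinU p (expand p hp f * g) = f * atkinU p g := by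
  ext n
  let scale : ℕ × ℕ ↪ ℕ × ℕ :=
    ⟨Prod.map (p * ·) (p * ·), (mul_right_injective₀ hp).prodMap (mul_right_injective₀ hp)⟩
  have hsub : (antidiagonal n).map scale ⊆ antidiagonal (p * n) := by
    intro x hx
    obtain ⟨y, hy, rfl⟩ := mem_map.mp hx
    simpa [scale, ← mul_add, hp] using hy
  rw [coeff_atkinU, coeff_mul, coeff_mul, ← sum_subset hsub, sum_map]
  · simp [scale, coeff_expand_mul]
  · rintro ⟨i, j⟩ hij hnot
    rw [coeff_expand_of_not_dvd, zero_mul]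
    rintro ⟨i, rfl⟩
    obtain ⟨j, rfl⟩ : p ∣ j := (Nat.dvd_add_right (dvd_mul_right p i)).mp
      (mem_antidiagonal.mp hij ▸ dvd_mul_right p n)
    refine hnot (mem_map.mpr ⟨(i, j), ?_, rfl⟩)
    simpa [← mul_add, hp] using hij

theorem expand_eq_pow (p : ℕ) [hp : Fact p.Prime] (f : (ZMod p)⟦X⟧) :
    expand p hp.out.ne_zero f = f ^ p := by
  have h := MvPowerSeries.map_frobenius_expand p hp.out.ne_zero (f := f)
  rwa [ZMod.frobenius_zmod, MvPowerSeries.map_id] at h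

theorem atkinU_pow_mul (p : ℕ) [hp : Fact p.Prime] (f g : (ZMod p)⟦X⟧) :
    atkinU p (f ^ p * g) = f * atkinU p g := by
  rw [← expand_eq_pow, atkinU_expand_mul]

end Dissection

section Support

theorem exists_eq_of_coeff_tsum_pow_ne_zero {R ι : Type*} [CommRing R] [TopologicalSpace R]
    [T2Space R] {e : ι → ℕ} (he : Tendsto e cofinite atTop) {n : ℕ}
    (h : coeff n (∑' i, (-X : R⟦X⟧) ^ e i) ≠ 0) : ∃ i, e i = n := by
  by_contra! hne
  have hsum := (PowerSeries.WithPiTopology.hasSum_iff_hasSum_coeff R).mp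
    (summable_pow (q := (-X : R⟦X⟧)) (by simp) he).hasSum n
  refine h (hsum.unique (hasSum_zero.congr_fun fun i ↦ ?_))
  rw [neg_pow, ← map_one (C (R := R)), ← map_neg, ← map_pow, coeff_C_mul_X_pow, if_neg (hne i).symm]

theorem isSquare_of_coeff_thetaPhi_ne_zero {R : Type*} [CommRing R] [TopologicalSpace R]
    [T2Space R] {n : ℕ} (h : coeff n (thetaPhi (-X : R⟦X⟧)) ≠ 0) : IsSquare n := by
  obtain ⟨i, rfl⟩ := exists_eq_of_coeff_tsum_pow_ne_zero tendsto_natAbs_sq h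
  exact .sq i.natAbs

theorem isSquare_of_coeff_thetaPsi_ne_zero {R : Type*} [CommRing R] [TopologicalSpace R]
    [T2Space R] {n : ℕ} (h : coeff n (thetaPsi (-X : R⟦X⟧)) ≠ 0) : IsSquare (8 * n + 1) := by
  obtain ⟨i, rfl⟩ := exists_eq_of_coeff_tsum_pow_ne_zero tendsto_triangular h
  exact ⟨2 * i + 1, by linarith [two_mul_triangular i]⟩

end Support

section FourRegular

variable (R : Type*) [CommRing R] [TopologicalSpace R] [IsTopologicalRing R] [T2Space R]

theorem eulerProd_X_factorization :
    oddProd X * (oddProd (X ^ 2) * eulerProd (X ^ 4)) = eulerProd (X : R⟦X⟧) := by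
  have h : oddProd (X ^ 2) * eulerProd (X ^ 4) = eulerProd (X ^ 2 : R⟦X⟧) := by
    have h := oddProd_mul_eulerProd_sq (q := (X ^ 2 : R⟦X⟧)) (by simp)
    rwa [← pow_mul] at h
  rw [h, oddProd_mul_eulerProd_sq constantCoeff_X]

theorem oddProd_X_sq_mul_thetaPsi :
    oddProd (X ^ 2) * thetaPsi (X ^ 2) = eulerProd (X ^ 4 : R⟦X⟧) := by
  have h := oddProd_mul_thetaPsi (q := (X ^ 2 : R⟦X⟧)) (by simp)
  rwa [← pow_mul] at h

variable [IsDomain R]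

theorem oddProd_X_sq_ne_zero : oddProd (X ^ 2 : R⟦X⟧) ≠ 0 := by
  have h : eulerProd (X : R⟦X⟧) ≠ 0 := PowerSeries.WithPiTopology.tprod_one_sub_X_pow_ne_zero R
  rw [← eulerProd_X_factorization] at h
  exact left_ne_zero_of_mul (right_ne_zero_of_mul h)

theorem thetaPsi_X_sq_ne_zero : thetaPsi (X ^ 2 : R⟦X⟧) ≠ 0 := by
  have h : eulerProd (X : R⟦X⟧) ≠ 0 := PowerSeries.WithPiTopology.tprod_one_sub_X_pow_ne_zero R
  rw [← eulerProd_X_factorization, ← oddProd_X_sq_mul_thetaPsi] at h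
  exact right_ne_zero_of_mul (right_ne_zero_of_mul (right_ne_zero_of_mul h))

theorem mk_bReg_four_mul_thetaPsi :
    PowerSeries.mk (fun n ↦ (bReg 4 n : R)) * thetaPsi (-X) = thetaPsi (X ^ 2) := by
  have hneg : oddProd (-X) * thetaPsi (-X) = eulerProd (X ^ 2 : R⟦X⟧) := by
    simpa using oddProd_mul_thetaPsi (q := (-X : R⟦X⟧)) (by simp)
  refine mul_left_cancel₀ (oddProd_X_sq_ne_zero R) ?_
  rw [oddProd_X_sq_mul_thetaPsi, ← mk_bReg_mul_eulerProd R four_pos,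
    ← oddProd_mul_eulerProd_sq constantCoeff_X, ← hneg,
    ← oddProd_mul_oddProd_neg constantCoeff_X]
  ring

theorem mk_bReg_four_mul_thetaPhi :
    PowerSeries.mk (fun n ↦ (bReg 4 n : R)) * thetaPhi (-X) = thetaPsi (-X) := by
  have hsq : thetaPsi (-X) ^ 2 = thetaPhi (-X) * thetaPsi (X ^ 2 : R⟦X⟧) := by
    simpa using thetaPsi_sq (q := (-X : R⟦X⟧)) (by simp)
  refine mul_right_cancel₀ (thetaPsi_X_sq_ne_zero R) ?_
  rw [mul_assoc, ← hsq, sq, ← mul_assoc, mk_bReg_four_mul_thetaPsi, mul_comm]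

theorem thetaPhi_neg_X_ne_zero : thetaPhi (-X : R⟦X⟧) ≠ 0 := by
  intro h
  have hψ := mk_bReg_four_mul_thetaPhi R
  rw [h, mul_zero] at hψ
  have hψ2 := mk_bReg_four_mul_thetaPsi R
  rw [← hψ, mul_zero] at hψ2
  exact thetaPsi_X_sq_ne_zero R hψ2.symm

end FourRegular

section ModThree

theorem atkinU_three_neg_X_mul_thetaPhi : atkinU 3 (-X * thetaPhi (-X : (ZMod 3)⟦X⟧)) = 0 := by
  ext n
  rw [coeff_atkinU, neg_mul, map_neg, map_zero, neg_eq_zero]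
  cases n with
  | zero => simp
  | succ n =>
    rw [show 3 * (n + 1) = 3 * n + 2 + 1 by ring, coeff_succ_X_mul]
    by_contra h
    obtain ⟨r, hr⟩ := isSquare_of_coeff_thetaPhi_ne_zero h
    have hr3 := congrArg (· % 3) hr
    rcases (by omega : r % 3 = 0 ∨ r % 3 = 1 ∨ r % 3 = 2) with h | h | h <;>
      simp [Nat.mul_mod, Nat.add_mod, h] at hr3

theorem atkinU_three_mk_bReg_four :
    atkinU 3 (PowerSeries.mk fun n ↦ (bReg 4 n : ZMod 3)) =
      thetaPhi (-X) * atkinU 3 (thetaPsi (-X)) := by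
  set B : (ZMod 3)⟦X⟧ := PowerSeries.mk fun n ↦ (bReg 4 n : ZMod 3)
  set φ : (ZMod 3)⟦X⟧ := thetaPhi (-X)
  set ψ : (ZMod 3)⟦X⟧ := thetaPsi (-X)
  have hX : constantCoeff (-X : (ZMod 3)⟦X⟧) = 0 := by simp
  have hB : B * φ = ψ := mk_bReg_four_mul_thetaPhi (ZMod 3)
  have hψ : ψ ^ 2 = φ * thetaPsi ((-X) ^ 2) := thetaPsi_sq hX
  have hφ : φ ^ 4 + -X * thetaPsi ((-X) ^ 2) ^ 4 = 1 := thetaPhi_pow_four_add hX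
  have hsplit : (φ ^ 2) ^ 3 * B = (φ ^ 3) ^ 3 * ψ + (ψ ^ 3) ^ 3 * (-X * φ) := by
    have hψ8 : ψ ^ 8 = φ ^ 4 * thetaPsi ((-X) ^ 2) ^ 4 := by
      rw [← mul_pow, ← hψ, ← pow_mul]
    linear_combination φ ^ 5 * hB - φ ^ 5 * ψ * hφ + X * φ * ψ * hψ8
  have hU := congrArg (atkinU 3) hsplit
  rw [map_add, atkinU_pow_mul, atkinU_pow_mul, atkinU_pow_mul, atkinU_three_neg_X_mul_thetaPhi,
    mul_zero, add_zero, pow_succ φ 2, mul_assoc] at hU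
  exact mul_left_cancel₀ (pow_ne_zero 2 (thetaPhi_neg_X_ne_zero (ZMod 3))) hU

theorem exists_eq_sq_add_of_not_three_dvd_bReg {k : ℕ} (h : ¬ 3 ∣ bReg 4 (3 * k)) :
    ∃ x y : ℕ, 24 * k + 1 = x ^ 2 + 6 * (2 * y) ^ 2 := by
  have hcoeff : coeff k (thetaPhi (-X) * atkinU 3 (thetaPsi (-X : (ZMod 3)⟦X⟧))) ≠ 0 := by
    rw [← atkinU_three_mk_bReg_four, coeff_atkinU, coeff_mk]
    rwa [ne_eq, ZMod.natCast_eq_zero_iff]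
  rw [coeff_mul] at hcoeff
  obtain ⟨⟨b, a⟩, hab, hne⟩ := Finset.exists_ne_zero_of_sum_ne_zero hcoeff
  obtain ⟨y, rfl⟩ := isSquare_of_coeff_thetaPhi_ne_zero (left_ne_zero_of_mul hne)
  obtain ⟨x, hx⟩ := isSquare_of_coeff_thetaPsi_ne_zero
    (coeff_atkinU 3 a (thetaPsi (-X : (ZMod 3)⟦X⟧)) ▸ right_ne_zero_of_mul hne)
  exact ⟨x, y, by linarith [Finset.HasAntidiagonal.mem_antidiagonal.mp hab]⟩

end ModThree

section Arithmetic

theorem legendreSym_neg_six {l : ℕ} [Fact l.Prime]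
    (hmod : l % 24 = 13 ∨ l % 24 = 17 ∨ l % 24 = 19 ∨ l % 24 = 23) : legendreSym l (-6) = -1 := by
  rw [jacobiSym.legendreSym.to_jacobiSym, jacobiSym.mod_right (-6) (Nat.odd_iff.mpr (by omega))]
  norm_num only [Int.natAbs_neg]
  rcases hmod with h | h | h | h <;> rw [h] <;> norm_num

theorem sq_dvd_sq_add_six_mul_sq {l : ℕ} [Fact l.Prime] (hl : legendreSym l (-6) = -1)
    {x y : ℕ} (hdvd : l ∣ x ^ 2 + 6 * y ^ 2) : l ^ 2 ∣ x ^ 2 + 6 * y ^ 2 := by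
  have h : (l : ℤ) ∣ (x : ℤ) ^ 2 - -6 * (y : ℤ) ^ 2 := by
    rw [neg_mul, sub_neg_eq_add]
    exact_mod_cast hdvd
  obtain ⟨hx, hy⟩ := legendreSym.prime_dvd_of_eq_neg_one hl h
  exact dvd_add (pow_dvd_pow_of_dvd (Int.natCast_dvd_natCast.mp hx) 2)
    ((pow_dvd_pow_of_dvd (Int.natCast_dvd_natCast.mp hy) 2).mul_left 6)

theorem not_sq_dvd_twentyFour_mul_add_sq {l : ℕ} (hl : l.Coprime 24) {n j : ℕ} (hj : ¬ l ∣ j) :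
    ¬ l ^ 2 ∣ 24 * (l * (l * n + j)) + l ^ 2 := by
  have hl0 : 0 < l := Nat.pos_of_ne_zero (by rintro rfl; norm_num at hl)
  rw [Nat.dvd_add_left dvd_rfl, mul_left_comm, sq, Nat.mul_dvd_mul_iff_left hl0, hl.dvd_mul_left,
    Nat.dvd_add_right (dvd_mul_right l n)]
  exact hj

theorem coprime_twentyFour {l : ℕ}
    (hmod : l % 24 = 13 ∨ l % 24 = 17 ∨ l % 24 = 19 ∨ l % 24 = 23) : l.Coprime 24 := by
  rw [Nat.coprime_comm, Nat.Coprime, Nat.gcd_rec]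
  rcases hmod with h | h | h | h <;> simp [h]

theorem exists_sq_eq_twentyFour_mul_add_one {l : ℕ} (hl : l.Coprime 24) :
    ∃ s, l ^ 2 = 24 * s + 1 := by
  have hunit : ∀ r < 24, r.Coprime 24 → r ^ 2 % 24 = 1 := by decide
  have h : l ^ 2 % 24 = 1 := by
    rw [Nat.pow_mod]
    exact hunit _ (Nat.mod_lt l (by norm_num)) ((Nat.mod_modEq l 24).gcd_eq.trans hl)
  exact ⟨l ^ 2 / 24, by omega⟩

end Arithmetic

end RegularPartition

/-- If `l ≡ 13,17,19,23 (mod 24)` is prime, then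
`b_4(3l(ln+j) + (l²-1)/8) ≡ 0 (mod 3)` for all `n` and `1 ≤ j ≤ l-1`. -/
theorem b4_mod_three_family_one (l : ℕ) (hl : l.Prime)
    (hmod : l % 24 = 13 ∨ l % 24 = 17 ∨ l % 24 = 19 ∨ l % 24 = 23)
    (n j : ℕ) (hj1 : 1 ≤ j) (hj2 : j ≤ l - 1) :
    bReg 4 (3 * l * (l * n + j) + (l ^ 2 - 1) / 8) % 3 = 0 := by
  have : Fact l.Prime := ⟨hl⟩
  have hl24 := RegularPartition.coprime_twentyFour hmod
  have hlj : ¬ l ∣ j := Nat.not_dvd_of_pos_of_lt hj1 (by omega)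
  obtain ⟨s, hs⟩ := RegularPartition.exists_sq_eq_twentyFour_mul_add_one hl24
  have hindex : 3 * l * (l * n + j) + (l ^ 2 - 1) / 8 = 3 * (l * (l * n + j) + s) := by
    rw [mul_add 3, ← mul_assoc 3]
    omega
  rw [hindex]
  by_contra h
  obtain ⟨x, y, hxy⟩ := RegularPartition.exists_eq_sq_add_of_not_three_dvd_bReg
    (mt Nat.mod_eq_zero_of_dvd h)
  have hform : 24 * (l * (l * n + j)) + l ^ 2 = x ^ 2 + 6 * (2 * y) ^ 2 := by linarith
  refine RegularPartition.not_sq_dvd_twentyFour_mul_add_sq (n := n) hl24 hlj ?_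
  rw [hform]
  refine RegularPartition.sq_dvd_sq_add_six_mul_sq (RegularPartition.legendreSym_neg_six hmod) ?_
  rw [← hform]
  exact dvd_add ((dvd_mul_right l _).mul_left 24) (dvd_pow_self l two_ne_zero)
end

section
/- If l is a prime with l ≡ 13, 17, 19, or 23 (mod 24), then b_4(3l(ln+j) + (9l^2-1)/8) ≡ 0 (mod 3) for every nonnegative integer n and every j with 1 ≤ j ≤ l-1. -/
/-!
Let `B`, `f`, `φ`, `ψ` be the power series in `q` with coefficients `b₄(n)`, Euler's product
`∏ (1 - q ^ i)` and Ramanujan's theta functions. Glaisher's theorem and the product for `f` give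
`B(q) f(q) = f(q⁴)`. Rearranging double series, with `f` expanded by the pentagonal number theorem,
yields `f(q) ψ(q) = f(q⁴) φ(-q²)` and `φ(-q) ψ(q) = ψ(-q) φ(-q²)`, hence `B(q) φ(-q) = ψ(-q)`.

Modulo 3, `φ(-q)³ = φ(-q³)`, so that `B(q) φ(-q³) = ψ(-q) φ(-q)²`. The exponents `≡ 1 (mod 3)` of
the right-hand side come from a ternary quadratic form whose solutions modulo 3 form four lattices
permuted by the symmetries of the form, and one finds `∑ b₄(3m + 1) q ^ m ≡ ψ(-q³) φ(-q)`. The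
exponents occurring there are the `m` with `8m + 3 = 3z² + 2y²` for some `z = 4n - 1` and `y = 2x`.
As `-6` is not a square modulo `l`, no such `8m + 3` is divisible by `l` exactly once.
-/

open PowerSeries
open scoped PowerSeries.WithPiTopology

/-! ### Sums of signed monomials -/

section LinearTopology

variable {ι κ S : Type*} [CommRing S] [TopologicalSpace S] [IsTopologicalRing S]
  [IsLinearTopology S S]

theorem nonarchimedeanRing_of_isLinearTopology : NonarchimedeanRing S where
  is_nonarchimedean _ hU :=
    let ⟨I, hI, hIU⟩ := IsLinearTopology.hasBasis_open_ideal.mem_iff.1 hU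
    ⟨⟨I.toAddSubgroup, hI⟩, hIU⟩

theorem hasSum_mul_of_isLinearTopology {f : ι → S} {g : κ → S} {a b : S} (hf : HasSum f a)
    (hg : HasSum g b) : HasSum (fun i : ι × κ => f i.1 * g i.2) (a * b) :=
  let := IsTopologicalAddGroup.rightUniformSpace S
  have := isUniformAddGroup_of_addCommGroup (G := S)
  have := nonarchimedeanRing_of_isLinearTopology (S := S)
  hf.mul_of_nonarchimedean hg

end LinearTopology

theorem hasSum_of_even_of_odd {M : Type*} [AddCommMonoid M] [TopologicalSpace M] [ContinuousAdd M]
    {f : ℤ → M} {a b : M} (ha : HasSum (fun n : ℤ => f (2 * n)) a)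
    (hb : HasSum (fun n : ℤ => f (2 * n + 1)) b) : HasSum f (a + b) := by
  have heven : Set.range (fun n : ℤ => 2 * n) = {n | Even n} := by
    ext; simp [even_iff_exists_two_mul]
  have hodd : Set.range (fun n : ℤ => 2 * n + 1) = {n | Odd n} := by
    ext; simp [Odd]
  refine HasSum.add_isCompl (heven ▸ hodd ▸ Int.isCompl_even_odd)
    ((Function.Injective.hasSum_range_iff ?_).2 ha) ((Function.Injective.hasSum_range_iff ?_).2 hb)
  all_goals exact fun m n h => by simpa using h

theorem continuous_of_continuous_coeff {α R : Type*} [Semiring R] [TopologicalSpace R]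
    [TopologicalSpace α] {f : α → R⟦X⟧} (h : ∀ n, Continuous fun a => coeff n (f a)) :
    Continuous f :=
  continuous_iff_continuousAt.2 fun a =>
    (WithPiTopology.tendsto_iff_coeff_tendsto R _ _ _).2 fun n => (h n).tendsto a

theorem continuous_expand {R : Type*} [CommRing R] [TopologicalSpace R] (k : ℕ) (hk : k ≠ 0) :
    Continuous (expand k hk : R⟦X⟧ → R⟦X⟧) := by
  refine continuous_of_continuous_coeff fun n => ?_
  simp only [coeff_expand]
  split_ifs
  exacts [WithPiTopology.continuous_coeff R _, continuous_const]

/-- The `r`-th component of the `a`-dissection of a power series: `∑ c (a * m + r) X ^ m` is made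
from `∑ c n X ^ n`. -/
noncomputable def dissect {R : Type*} [CommRing R] (a r : ℕ) : R⟦X⟧ →ₗ[R] R⟦X⟧ where
  toFun f := .mk fun m => coeff (a * m + r) f
  map_add' f g := by ext; simp
  map_smul' c f := by ext; simp

section Dissect

variable {R : Type*} [CommRing R] {a r : ℕ}

@[simp]
theorem coeff_dissect (f : R⟦X⟧) (m : ℕ) : coeff m (dissect a r f) = coeff (a * m + r) f := by
  simp [dissect]

theorem continuous_dissect [TopologicalSpace R] : Continuous (dissect a r : R⟦X⟧ →ₗ[R] R⟦X⟧) :=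
  continuous_of_continuous_coeff fun m => by
    simpa using WithPiTopology.continuous_coeff R (a * m + r)

theorem dissect_X_pow (ha : a ≠ 0) (m : ℕ) :
    dissect a r (X ^ (a * m + r) : R⟦X⟧) = X ^ m := by
  ext
  simp [coeff_X_pow, ha]

theorem dissect_X_pow_of_mod_ne (hr : r < a) {n : ℕ} (hn : n % a ≠ r) :
    dissect a r (X ^ n : R⟦X⟧) = 0 := by
  ext m
  have : a * m + r ≠ n := fun h => hn (by simp [← h, Nat.mod_eq_of_lt hr])
  simp [coeff_X_pow, this]

theorem dissect_mul_expand (ha : a ≠ 0) (hr : r < a) (f g : R⟦X⟧) :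
    dissect a r (f * expand a ha g) = dissect a r f * g := by
  ext m
  rw [coeff_dissect, coeff_mul, coeff_mul]
  refine (Finset.sum_of_injOn (fun p => (a * p.1 + r, a * p.2)) ?_ ?_ ?_ ?_).symm
  · exact fun p _ q _ h => by simpa [Prod.ext_iff, ha] using h
  · intro p hp
    obtain rfl := Finset.HasAntidiagonal.mem_antidiagonal.1 hp
    exact Finset.HasAntidiagonal.mem_antidiagonal.2 (by ring)
  · rintro ⟨i, j⟩ hij hnot
    replace hij : i + j = a * m + r := Finset.HasAntidiagonal.mem_antidiagonal.1 hij
    rw [coeff_expand_of_not_dvd, mul_zero]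
    rintro ⟨k, rfl⟩
    obtain ⟨l, rfl⟩ : ∃ l, m = l + k :=
      Nat.exists_eq_add_of_le' (Nat.lt_succ_iff.1 (Nat.lt_of_mul_lt_mul_left (a := a) (by lia)))
    refine hnot ⟨(l, k), Finset.HasAntidiagonal.mem_antidiagonal.2 rfl, ?_⟩
    rw [Prod.mk.injEq]
    lia
  · simp [coeff_expand_mul]

end Dissect

theorem map_intUnits_smul {F A B : Type*} [AddCommGroup A] [AddCommGroup B] [FunLike F A B]
    [AddMonoidHomClass F A B] (f : F) (u : ℤˣ) (x : A) : f (u • x) = u • f x :=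
  map_zsmul f (u : ℤ) x

section SignedMonomials

variable {ι κ R : Type*} [CommRing R] [TopologicalSpace R] {e : ι → ℕ} {u : ι → ℤˣ}
  {d : κ → ℕ} {v : κ → ℤˣ} {a b : R⟦X⟧}

theorem summable_smul_X_pow (u : ι → ℤˣ) (he : ∀ n, (e ⁻¹' {n}).Finite) :
    Summable fun i => u i • (X ^ e i : R⟦X⟧) := by
  refine (WithPiTopology.summable_iff_summable_coeff R).2 fun n =>
    summable_of_hasFiniteSupport ((he n).subset fun i hi => ?_)
  by_contra h
  exact hi (by simp only [map_intUnits_smul, coeff_X_pow, if_neg (Ne.symm h), smul_zero])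

theorem hasSum_expand (h : HasSum (fun i => u i • (X ^ e i : R⟦X⟧)) a) (k : ℕ) (hk : k ≠ 0) :
    HasSum (fun i => u i • (X ^ (k * e i) : R⟦X⟧)) (expand k hk a) := by
  simpa only [Function.comp_def, map_intUnits_smul, map_pow, expand_X, pow_mul]
    using h.map (expand k hk) (continuous_expand k hk)

theorem hasSum_dissect (h : HasSum (fun i => u i • (X ^ e i : R⟦X⟧)) a) (k r : ℕ) :
    HasSum (fun i => u i • dissect k r (X ^ e i : R⟦X⟧)) (dissect k r a) := by
  simpa only [Function.comp_def, map_intUnits_smul] using h.map (dissect k r) continuous_dissect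

theorem hasSum_coeff (h : HasSum (fun i => u i • (X ^ e i : R⟦X⟧)) a) (n : ℕ) :
    HasSum (fun i => u i • if n = e i then (1 : R) else 0) (coeff n a) := by
  simpa only [map_intUnits_smul, coeff_X_pow]
    using (WithPiTopology.hasSum_iff_hasSum_coeff R).1 h n

theorem coeff_eq_of_hasSum [T2Space R] (h : HasSum (fun i => u i • (X ^ e i : R⟦X⟧)) a) {n : ℕ}
    {i : ι} (hi : ∀ j, n = e j ↔ j = i) : coeff n a = u i • (1 : R) := by
  refine (hasSum_coeff h n).unique ?_
  simpa [(hi i).2] using hasSum_single (f := fun j => u j • if n = e j then (1 : R) else 0) i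
    fun j hj => by rw [if_neg (mt (hi j).1 hj), smul_zero]

theorem coeff_eq_zero_of_hasSum [T2Space R] (h : HasSum (fun i => u i • (X ^ e i : R⟦X⟧)) a)
    {n : ℕ} (hn : ∀ i, e i ≠ n) : coeff n a = 0 := by
  refine (hasSum_coeff h n).unique ?_
  simpa only [if_neg (hn _).symm, smul_zero] using hasSum_zero

variable [DiscreteTopology R]

theorem hasSum_smul_X_pow_mul (ha : HasSum (fun i => u i • (X ^ e i : R⟦X⟧)) a)
    (hb : HasSum (fun k => v k • (X ^ d k : R⟦X⟧)) b) :
    HasSum (fun p : ι × κ => (u p.1 * v p.2) • (X ^ (e p.1 + d p.2) : R⟦X⟧)) (a * b) := by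
  have := hasSum_mul_of_isLinearTopology ha hb
  simpa only [smul_mul_smul_comm, ← pow_add] using this

theorem eq_of_hasSum_of_sign_reversing [NoZeroDivisors R] (h2 : (2 : R) ≠ 0) {σ : ι ≃ ι} {g : κ → ι}
    (hg : Function.Injective g) (he : ∀ i, e (σ i) = e i)
    (hneg : ∀ i ∉ Set.range g, u (σ i) = -u i) (hpos : ∀ k, u (σ (g k)) = u (g k))
    (ha : HasSum (fun i => u i • (X ^ e i : R⟦X⟧)) a)
    (hb : HasSum (fun k => u (g k) • (X ^ e (g k) : R⟦X⟧)) b) : a = b := by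
  have h2' : (2 : R⟦X⟧) ≠ 0 := fun h =>
    h2 (by simpa only [map_ofNat, map_zero] using congrArg constantCoeff h)
  have h : HasSum (fun i => (u i • X ^ e i + u (σ i) • X ^ e (σ i) : R⟦X⟧)) (2 * a) := by
    simpa only [two_mul, Function.comp_apply] using ha.add (σ.hasSum_iff.2 ha)
  rw [← hg.hasSum_iff fun i hi => by rw [he, hneg i hi, Units.neg_smul, add_neg_cancel]] at h
  refine mul_left_cancel₀ h2' (h.unique ?_)
  simpa only [Function.comp_def, he, hpos, ← two_mul] using hb.mul_left 2

theorem zpow_eq_zpow_of_even_sub (ε : ℤˣ) {m n : ℤ} (h : Even (m - n)) : ε ^ m = ε ^ n := by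
  obtain ⟨k, hk⟩ := h
  rw [eq_add_of_sub_eq hk, zpow_add, zpow_add, ← mul_zpow, Int.units_mul_self, one_zpow, one_mul]

/-- The terms with `p.1 + p.2` odd cancel in pairs under `p ↦ p.swap`. -/
theorem eq_of_hasSum_of_symm [NoZeroDivisors R] (h2 : (2 : R) ≠ 0) {e : ℤ → ℤ → ℕ}
    (he : ∀ x y, e x y = e y x)
    (ha : HasSum (fun p : ℤ × ℤ => (-1 : ℤˣ) ^ p.1 • (X ^ e p.1 p.2 : R⟦X⟧)) a)
    (hb : HasSum (fun p : ℤ × ℤ =>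
      (-1 : ℤˣ) ^ (p.1 - p.2) • (X ^ e (p.1 - p.2) (p.1 + p.2) : R⟦X⟧)) b) : a = b := by
  refine eq_of_hasSum_of_sign_reversing h2 (e := fun p : ℤ × ℤ => e p.1 p.2)
    (u := fun p : ℤ × ℤ => (-1 : ℤˣ) ^ p.1) (σ := Equiv.prodComm ℤ ℤ)
    (g := fun p : ℤ × ℤ => (p.1 - p.2, p.1 + p.2))
    (fun p q h => ?_) (fun p => he p.2 p.1) (fun p hp => ?_) (fun p => ?_) ha hb
  · simp only [Prod.ext_iff] at h ⊢
    lia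
  · have hodd : ¬ Even (p.1 - p.2) := fun ⟨x, hx⟩ => hp ⟨(p.2 + x, -x), by
      simp only [Prod.ext_iff]
      lia⟩
    have heven : Even (p.2 - (p.1 + 1)) := by grind
    exact (zpow_eq_zpow_of_even_sub _ heven).trans (Int.negOnePow_succ p.1)
  · exact zpow_eq_zpow_of_even_sub _ (by simp)

end SignedMonomials

/-! ### Theta functions -/

/-- The hexagonal number `n * (2 * n - 1)`; as `n` runs through `ℤ`, every triangular number occurs
exactly once. -/
def hexagonal (n : ℤ) : ℕ := (n * (2 * n - 1)).toNat

theorem natCast_hexagonal (n : ℤ) : (hexagonal n : ℤ) = n * (2 * n - 1) :=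
  Int.toNat_of_nonneg (by rcases le_or_gt n 0 with h | h <;> nlinarith)

theorem hexagonal_injective : Function.Injective hexagonal := fun m n h => by
  have h' : (m - n) * (2 * (m + n) - 1) = 0 := by
    linear_combination natCast_hexagonal n - natCast_hexagonal m + congrArg ((↑) : ℕ → ℤ) h
  rcases mul_eq_zero.1 h' with h | h <;> lia

/-- A bijection `n ↦ m` of `ℤ` for which `{2 * m + k - 1, 2 * m + k}` is
`{2 * n - 1, 2 * n}` or `{-2 * n, 1 - 2 * n}`. It expresses `hexagonal n` as a polynomial in `k` and
`m` whatever the parity of `k`. -/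
def hexagonalShift (k : ℤ) : ℤ ≃ ℤ :=
  if Even k then Equiv.subRight (k / 2) else Equiv.subLeft (-(k / 2))

theorem two_mul_hexagonal_eq (k n : ℤ) :
    2 * (hexagonal n : ℤ) =
      (2 * hexagonalShift k n + k - 1) * (2 * hexagonalShift k n + k) := by
  rw [natCast_hexagonal, hexagonalShift]
  split_ifs with hk
  · obtain ⟨j, rfl⟩ := even_iff_exists_two_mul.1 hk
    simp only [Equiv.subRight_apply, Int.mul_ediv_cancel_left j two_ne_zero]
    ring
  · obtain ⟨j, rfl⟩ := Int.not_even_iff_odd.1 hk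
    rw [Equiv.subLeft_apply, show (2 * j + 1) / 2 = j by lia]
    ring

theorem two_mul_hexagonal_symm_eq (k m : ℤ) :
    2 * (hexagonal ((hexagonalShift k).symm m) : ℤ) = (2 * m + k - 1) * (2 * m + k) := by
  rw [two_mul_hexagonal_eq k, Equiv.apply_symm_apply]

/-- Ramanujan's theta function `φ(εq) = ∑ ε ^ x q ^ (x ^ 2)` for a sign `ε`; here
`ε ^ x = ε ^ (x ^ 2)`. -/
noncomputable def thetaPhi (R : Type*) [CommRing R] [TopologicalSpace R] (ε : ℤˣ) : R⟦X⟧ :=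
  ∑' x : ℤ, ε ^ x • X ^ x.natAbs ^ 2

/-- Ramanujan's theta function `ψ(εq) = ∑ ε ^ n q ^ (n * (2 * n - 1))` for a sign `ε`; here
`ε ^ n = ε ^ (n * (2 * n - 1))`. -/
noncomputable def thetaPsi (R : Type*) [CommRing R] [TopologicalSpace R] (ε : ℤˣ) : R⟦X⟧ :=
  ∑' n : ℤ, ε ^ n • X ^ hexagonal n

section Theta

variable (R : Type*) [CommRing R] [TopologicalSpace R]

theorem hasSum_thetaPhi (ε : ℤˣ) :
    HasSum (fun x : ℤ => ε ^ x • (X ^ x.natAbs ^ 2 : R⟦X⟧)) (thetaPhi R ε) :=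
  (summable_smul_X_pow _ fun n =>
    (Set.finite_Icc (-n : ℤ) n).subset fun x (hx : x.natAbs ^ 2 = n) => by
      have := Nat.le_self_pow two_ne_zero x.natAbs
      exact Set.mem_Icc.2 (by lia)).hasSum

theorem hasSum_thetaPsi (ε : ℤˣ) :
    HasSum (fun n : ℤ => ε ^ n • (X ^ hexagonal n : R⟦X⟧)) (thetaPsi R ε) :=
  (summable_smul_X_pow _ fun n =>
    (Set.finite_singleton n).preimage hexagonal_injective.injOn).hasSum

theorem constantCoeff_thetaPhi [T2Space R] (ε : ℤˣ) : constantCoeff (thetaPhi R ε) = 1 := by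
  simpa using coeff_eq_of_hasSum (hasSum_thetaPhi R ε) (n := 0) (i := 0) fun j => by
    rw [eq_comm, sq_eq_zero_iff, Int.natAbs_eq_zero]

theorem constantCoeff_thetaPsi [T2Space R] (ε : ℤˣ) : constantCoeff (thetaPsi R ε) = 1 := by
  have h0 : hexagonal 0 = 0 := rfl
  simpa using coeff_eq_of_hasSum (hasSum_thetaPsi R ε) (n := 0) (i := 0) fun j => by
    rw [← hexagonal_injective.eq_iff, h0, eq_comm]

theorem hasSum_pentagonalSeries_smul :
    HasSum (fun k : ℤ => (-1 : ℤˣ) ^ k • (X ^ pentagonal k : R⟦X⟧)) (pentagonalSeries R) := by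
  simpa only [← Int.negOnePow_def, Units.smul_def, zsmul_eq_mul]
    using WithPiTopology.hasSum_pentagonalSeries R

variable [DiscreteTopology R]

theorem hasSum_X_pow_mul_succ :
    HasSum (fun x : ℤ => (1 : ℤˣ) • (X ^ (x * (x + 1)).toNat : R⟦X⟧))
      (2 * expand 2 two_ne_zero (thetaPsi R 1)) := by
  have hψ := hasSum_expand (hasSum_thetaPsi R 1) 2 two_ne_zero
  have heven (n : ℤ) : (2 * n * (2 * n + 1)).toNat = 2 * hexagonal (-n) := by
    have := natCast_hexagonal (-n)
    rw [show 2 * n * (2 * n + 1) = 2 * (-n * (2 * -n - 1)) by ring]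
    lia
  have hodd (n : ℤ) : ((2 * n + 1) * (2 * n + 1 + 1)).toNat = 2 * hexagonal (n + 1) := by
    have := natCast_hexagonal (n + 1)
    rw [show (2 * n + 1) * (2 * n + 1 + 1) = 2 * ((n + 1) * (2 * (n + 1) - 1)) by ring]
    lia
  rw [two_mul]
  refine hasSum_of_even_of_odd ?_ ?_
  · simpa only [Function.comp_def, heven, Equiv.neg_apply, one_zpow]
      using (Equiv.neg ℤ).hasSum_iff.2 hψ
  · simpa only [Function.comp_def, hodd, Equiv.coe_addRight, one_zpow]
      using (Equiv.addRight 1).hasSum_iff.2 hψ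

theorem thetaPsi_sq (ε : ℤˣ) :
    thetaPsi R ε ^ 2 = thetaPhi R ε * expand 2 two_ne_zero (thetaPsi R 1) := by
  have hψ := hasSum_smul_X_pow_mul (hasSum_thetaPsi R ε) (hasSum_thetaPsi R ε)
  have hφψ := hasSum_smul_X_pow_mul (hasSum_thetaPhi R ε)
    (hasSum_expand (hasSum_thetaPsi R 1) 2 two_ne_zero)
  let σ : ℤ × ℤ ≃ ℤ × ℤ := (Equiv.prodShear (Equiv.refl ℤ) hexagonalShift).trans
    ⟨fun p => (p.2 + p.1, p.2), fun p => (p.1 - p.2, p.2), fun p => by simp, fun p => by simp⟩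
  rw [sq]
  refine HasSum.unique ?_ hφψ
  convert σ.hasSum_iff.2 hψ using 2 with p
  obtain ⟨x, n⟩ := p
  have hexp : hexagonal (hexagonalShift x n + x) + hexagonal (hexagonalShift x n) =
      x.natAbs ^ 2 + 2 * hexagonal n := by
    zify
    rw [sq_abs, two_mul_hexagonal_eq x, natCast_hexagonal, natCast_hexagonal]
    ring
  have hsign : ε ^ (hexagonalShift x n + x) * ε ^ hexagonalShift x n = ε ^ x * 1 ^ n := by
    rw [← zpow_add, one_zpow, mul_one]
    exact zpow_eq_zpow_of_even_sub ε ⟨hexagonalShift x n, by ring⟩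
  simp only [σ, Function.comp_apply, Equiv.trans_apply, Equiv.prodShear_apply, Equiv.refl_apply,
    Equiv.coe_fn_mk, hexp, hsign]

variable [NoZeroDivisors R]

theorem thetaPhi_mul_thetaPhi_neg (h2 : (2 : R) ≠ 0) :
    thetaPhi R (-1) * thetaPhi R 1 = expand 2 two_ne_zero (thetaPhi R (-1)) ^ 2 := by
  have hφ := hasSum_expand (hasSum_thetaPhi R (-1)) 2 two_ne_zero
  refine eq_of_hasSum_of_symm h2 (e := fun x y => x.natAbs ^ 2 + y.natAbs ^ 2)
    (fun x y => add_comm _ _) ?_ ?_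
  · simpa using hasSum_smul_X_pow_mul (hasSum_thetaPhi R (-1)) (hasSum_thetaPhi R 1)
  · rw [sq]
    convert hasSum_smul_X_pow_mul hφ hφ using 3 with p
    · rw [← zpow_add]
      exact zpow_eq_zpow_of_even_sub _ ⟨-p.2, by ring⟩
    · congr 1
      zify
      simp only [sq_abs]
      ring

theorem pentagonalSeries_mul_thetaPsi (h2 : (2 : R) ≠ 0) :
    pentagonalSeries R * thetaPsi R 1 =
      expand 4 four_ne_zero (pentagonalSeries R) * expand 2 two_ne_zero (thetaPhi R (-1)) := by
  let σ : ℤ × ℤ ≃ ℤ × ℤ := Equiv.prodShear (Equiv.refl ℤ) fun k => (hexagonalShift k).symm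
  have hfψ := σ.hasSum_iff.2
    (hasSum_smul_X_pow_mul (hasSum_pentagonalSeries_smul R) (hasSum_thetaPsi R 1))
  have hfφ := hasSum_smul_X_pow_mul (hasSum_expand (hasSum_pentagonalSeries_smul R) 4 four_ne_zero)
    (hasSum_expand (hasSum_thetaPhi R (-1)) 2 two_ne_zero)
  have he (k m : ℤ) : (pentagonal k + hexagonal ((hexagonalShift k).symm m) : ℤ) =
      2 * (k ^ 2 + k * m + m ^ 2) - k - m := by
    linarith [two_mul_natCast_pentagonal k, two_mul_hexagonal_symm_eq k m]
  refine eq_of_hasSum_of_symm h2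
    (e := fun k m => pentagonal k + hexagonal ((hexagonalShift k).symm m)) ?_ ?_ ?_
  · intro k m
    zify
    rw [he, he]
    ring
  · simpa [Function.comp_def, σ] using hfψ
  · convert hfφ using 3 with p
    · rw [← zpow_add]
      exact zpow_eq_zpow_of_even_sub _ ⟨-p.2, by ring⟩
    · congr 1
      zify
      rw [sq_abs, he]
      linear_combination -2 * two_mul_natCast_pentagonal p.1

theorem thetaPhi_mul_thetaPsi (h2 : (2 : R) ≠ 0) :
    thetaPhi R (-1) * thetaPsi R 1 = thetaPsi R (-1) * expand 2 two_ne_zero (thetaPhi R (-1)) := by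
  have hsq : (thetaPhi R (-1) * thetaPsi R 1) ^ 2 =
      (thetaPsi R (-1) * expand 2 two_ne_zero (thetaPhi R (-1))) ^ 2 := by
    linear_combination thetaPhi R (-1) ^ 2 * thetaPsi_sq R 1
      - expand 2 two_ne_zero (thetaPhi R (-1)) ^ 2 * thetaPsi_sq R (-1)
      + thetaPhi R (-1) * expand 2 two_ne_zero (thetaPsi R 1) * thetaPhi_mul_thetaPhi_neg R h2
  refine (sq_eq_sq_iff_eq_or_eq_neg.1 hsq).resolve_right fun h => h2 ?_
  have h' := congrArg constantCoeff h
  simp only [map_mul, map_neg, constantCoeff_expand, constantCoeff_thetaPhi,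
    constantCoeff_thetaPsi] at h'
  linear_combination h'

end Theta

/-! ### Regular partitions -/

/-- The generating function of the `k`-regular partitions. -/
noncomputable def bRegSeries (R : Type*) [CommRing R] (k : ℕ) : R⟦X⟧ := .mk fun n => (bReg k n : R)

theorem bReg_eq_card_countRestricted {k : ℕ} (hk : 0 < k) (n : ℕ) :
    bReg k n = (Nat.Partition.countRestricted n k).card :=
  Nat.Partition.card_restricted_eq_card_countRestricted n hk

section BRegSeries

variable (R : Type*) [CommRing R]

theorem bRegSeries_mul_pentagonalSeries {k : ℕ} (hk : k ≠ 0) :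
    bRegSeries R k * pentagonalSeries R = expand k hk (pentagonalSeries R) := by
  let : TopologicalSpace R := ⊥
  have : DiscreteTopology R := ⟨rfl⟩
  have hk' := Nat.pos_of_ne_zero hk
  have hprod := (Nat.Partition.hasProd_powerSeriesMk_card_countRestricted R hk').mul
    (WithPiTopology.hasProd_one_sub_X_pow R)
  simp only [pow_mul, geom_sum_mul_neg, ← bReg_eq_card_countRestricted hk'] at hprod
  refine hprod.unique ?_
  simpa [Function.comp_def, ← pow_mul, mul_comm] using
    (WithPiTopology.hasProd_one_sub_X_pow R).map (expand k hk) (continuous_expand k hk)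

theorem constantCoeff_pentagonalSeries : constantCoeff (pentagonalSeries R) = 1 := by
  have h : pentagonal 0 = 0 := by simp [pentagonal_def]
  simpa [h] using coeff_pentagonalSeries_pentagonal R 0

variable [TopologicalSpace R] [DiscreteTopology R] [IsDomain R]

theorem bRegSeries_four_mul_expand_thetaPhi (h2 : (2 : R) ≠ 0) :
    bRegSeries R 4 * expand 2 two_ne_zero (thetaPhi R (-1)) = thetaPsi R 1 := by
  have hne : pentagonalSeries R ≠ 0 := fun h => by
    simpa [h] using constantCoeff_pentagonalSeries R
  refine mul_left_cancel₀ hne ?_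
  rw [pentagonalSeries_mul_thetaPsi R h2, ← bRegSeries_mul_pentagonalSeries R four_ne_zero]
  ring

theorem bRegSeries_four_mul_thetaPhi (h2 : (2 : R) ≠ 0) :
    bRegSeries R 4 * thetaPhi R (-1) = thetaPsi R (-1) := by
  have hne : expand 2 two_ne_zero (thetaPhi R (-1)) ≠ 0 := fun h => by
    simpa [constantCoeff_thetaPhi] using congrArg constantCoeff h
  refine mul_right_cancel₀ hne ?_
  linear_combination thetaPhi R (-1) * bRegSeries_four_mul_expand_thetaPhi R h2
    + thetaPhi_mul_thetaPsi R h2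

end BRegSeries

/-! ### Reduction modulo 3 -/

theorem pow_three_eq_expand (f : (ZMod 3)⟦X⟧) : f ^ 3 = expand 3 three_ne_zero f := by
  have h := MvPowerSeries.map_frobenius_expand (σ := Unit) (p := 3) (by norm_num) (f := f)
  rw [ZMod.frobenius_zmod, MvPowerSeries.map_id] at h
  exact h.symm

/-- A parametrization of the triples `(n, x, y)` with `n - 1 ≡ x` and `y ≡ 0` modulo `3`, chosen so
that `n * (2 * n - 1) + x ^ 2 + y ^ 2` has no mixed terms in the parameters. -/
def congruentTriple (p : ℤ × ℤ × ℤ) : ℤ × ℤ × ℤ :=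
  (p.2.1 - p.1 + 1, p.2.1 + 2 * p.1, 3 * p.2.2)

theorem congruentTriple_injective : Function.Injective congruentTriple := fun p q h => by
  simp only [congruentTriple, Prod.ext_iff] at h ⊢
  lia

theorem range_congruentTriple :
    Set.range congruentTriple = {p | (p.1 : ZMod 3) - 1 = p.2.1 ∧ (p.2.2 : ZMod 3) = 0} := by
  ext ⟨z, x, y⟩
  constructor
  · rintro ⟨⟨n, c, d⟩, h⟩
    simp only [congruentTriple, Prod.mk.injEq] at h
    obtain ⟨rfl, rfl, rfl⟩ := h
    have h3 : (3 : ZMod 3) = 0 := rfl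
    constructor <;> push_cast
    · linear_combination -n * h3
    · linear_combination d * h3
  · rintro ⟨hx, hy⟩
    obtain ⟨d, rfl⟩ := (ZMod.intCast_zmod_eq_zero_iff_dvd y 3).1 hy
    obtain ⟨n, hn⟩ := (ZMod.intCast_eq_intCast_iff_dvd_sub (z - 1) x 3).1 (by exact_mod_cast hx)
    refine ⟨(n, z + n - 1, d), ?_⟩
    simp only [congruentTriple, Prod.mk.injEq]
    push_cast at hn ⊢
    lia

theorem hexagonal_add_sq_add_sq (n c d : ℤ) :
    hexagonal (c - n + 1) + ((c + 2 * n).natAbs ^ 2 + (3 * d).natAbs ^ 2) =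
      3 * (hexagonal n + ((c * (c + 1)).toNat + 3 * d.natAbs ^ 2)) + 1 := by
  have hc : 0 ≤ c * (c + 1) := by rcases le_or_gt 0 c with h | h <;> nlinarith
  zify
  rw [Int.toNat_of_nonneg hc, natCast_hexagonal, natCast_hexagonal, sq_abs, sq_abs, sq_abs]
  ring

theorem sub_one_sq_eq_of_mod_three {n x y : ℤ}
    (h : (hexagonal n + (x.natAbs ^ 2 + y.natAbs ^ 2)) % 3 = 1) :
    ((n : ZMod 3) - 1) ^ 2 = (x : ZMod 3) ^ 2 + (y : ZMod 3) ^ 2 := by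
  have h' : ((hexagonal n + (x.natAbs ^ 2 + y.natAbs ^ 2) : ℤ) : ZMod 3) = 1 := by
    exact_mod_cast (ZMod.natCast_eq_natCast_iff' _ 1 3).2 h
  rw [natCast_hexagonal, Int.natAbs_sq, Int.natAbs_sq] at h'
  push_cast at h'
  have h3 : (3 : ZMod 3) = 0 := rfl
  linear_combination -h' + ((n : ZMod 3) ^ 2 - n) * h3

theorem sum_ite_eq_one_of_sq_eq : ∀ z x y : ZMod 3, z ^ 2 = x ^ 2 + y ^ 2 →
    (if z = x ∧ y = 0 then 1 else 0) + (if z = -x ∧ y = 0 then 1 else 0) +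
      (if z = y ∧ x = 0 then 1 else 0) + (if z = -y ∧ x = 0 then 1 else 0) = (1 : ZMod 3) := by
  decide

/-- A triple with `(n - 1) ^ 2 = x ^ 2 + y ^ 2` in `ZMod 3` lies in exactly one or in all four of
the images of `Set.range congruentTriple` under `(x, y) ↦ (±x, y)` and `(x, y) ↦ (±y, x)`. -/
theorem hasSum_of_hasSum_comp_congruentTriple {M : Type*} [AddCommGroup M] [Module (ZMod 3) M]
    [TopologicalSpace M] [ContinuousAdd M] {T : ℤ × ℤ × ℤ → M} {b : M}
    (hneg : ∀ n x y, T (n, -x, y) = T (n, x, y)) (hswap : ∀ n x y, T (n, y, x) = T (n, x, y))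
    (hT : ∀ n x y : ℤ, ((n : ZMod 3) - 1) ^ 2 ≠ (x : ZMod 3) ^ 2 + (y : ZMod 3) ^ 2 →
      T (n, x, y) = 0)
    (hb : HasSum (T ∘ congruentTriple) b) : HasSum T b := by
  rw [← congruentTriple_injective.hasSum_range_iff] at hb
  replace hb := hasSum_subtype_iff_indicator.1 hb
  rw [range_congruentTriple] at hb
  let neg : ℤ × ℤ × ℤ ≃ ℤ × ℤ × ℤ :=
    (Equiv.refl ℤ).prodCongr ((Equiv.neg ℤ).prodCongr (Equiv.refl ℤ))
  let swap : ℤ × ℤ × ℤ ≃ ℤ × ℤ × ℤ := (Equiv.refl ℤ).prodCongr (Equiv.prodComm ℤ ℤ)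
  have h4 : b + b + b + b = b := by
    simpa [add_smul] using congrArg (· • b) (show (1 + 1 + 1 + 1 : ZMod 3) = 1 from rfl)
  have hsum := ((hb.add (neg.hasSum_iff.2 hb)).add (swap.hasSum_iff.2 hb)).add
    ((swap.trans neg).hasSum_iff.2 hb)
  rw [h4] at hsum
  convert hsum using 1
  funext ⟨n, x, y⟩
  by_cases h : ((n : ZMod 3) - 1) ^ 2 = (x : ZMod 3) ^ 2 + (y : ZMod 3) ^ 2
  · simpa [add_smul, ite_smul, Set.indicator_apply, neg, swap, hneg, hswap] using
      (congrArg (· • T (n, x, y)) (sum_ite_eq_one_of_sq_eq _ _ _ h)).symm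
  · simp [Set.indicator_apply, neg, swap, hneg, hswap, hT n x y h]

theorem dissect_thetaPsi_mul_thetaPhi_sq :
    dissect 3 1 (thetaPsi (ZMod 3) (-1) * thetaPhi (ZMod 3) (-1) ^ 2) =
      thetaPsi (ZMod 3) (-1) * expand 2 two_ne_zero (thetaPsi (ZMod 3) 1) *
        expand 3 three_ne_zero (thetaPhi (ZMod 3) (-1)) := by
  have hψ := hasSum_thetaPsi (ZMod 3) (-1)
  have hφ := hasSum_thetaPhi (ZMod 3) (-1)
  have ha := hasSum_dissect (hasSum_smul_X_pow_mul hψ (hasSum_smul_X_pow_mul hφ hφ)) 3 1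
  have hb := hasSum_smul_X_pow_mul hψ (hasSum_smul_X_pow_mul (hasSum_X_pow_mul_succ (ZMod 3))
    (hasSum_expand hφ 3 three_ne_zero))
  rw [sq]
  refine ha.unique (hasSum_of_hasSum_comp_congruentTriple ?_ ?_ ?_ ?_)
  · intro n x y
    simp
  · intro n x y
    simp [mul_comm, add_comm]
  · intro n x y h
    simp only
    rw [dissect_X_pow_of_mod_ne (by norm_num) (mt sub_one_sq_eq_of_mod_three h), smul_zero]
  · convert hb.neg using 1
    · funext ⟨n, c, d⟩
      have hsign : (-1 : ℤˣ) ^ (c - n + 1) * ((-1) ^ (c + 2 * n) * (-1) ^ (3 * d)) =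
          -((-1) ^ n * (1 * (-1) ^ d)) := by
        rw [one_mul, ← zpow_add, ← zpow_add, ← zpow_add]
        exact (zpow_eq_zpow_of_even_sub _ ⟨c + d, by ring⟩).trans (Int.negOnePow_succ (n + d))
      simp only [Function.comp_apply, congruentTriple, hexagonal_add_sq_add_sq, hsign,
        Units.neg_smul, dissect_X_pow three_ne_zero]
    · have h3 : (3 : (ZMod 3)⟦X⟧) = 0 := by
        rw [← map_ofNat C, show (OfNat.ofNat 3 : ZMod 3) = 0 from rfl, map_zero]
      linear_combination thetaPsi (ZMod 3) (-1) * expand 2 two_ne_zero (thetaPsi (ZMod 3) 1) *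
        expand 3 three_ne_zero (thetaPhi (ZMod 3) (-1)) * h3

theorem dissect_bRegSeries_four :
    dissect 3 1 (bRegSeries (ZMod 3) 4) =
      expand 3 three_ne_zero (thetaPsi (ZMod 3) (-1)) * thetaPhi (ZMod 3) (-1) := by
  have h2 : (2 : ZMod 3) ≠ 0 := by decide
  have hne : thetaPhi (ZMod 3) (-1) ≠ 0 := fun h => by
    simpa [h] using constantCoeff_thetaPhi (ZMod 3) (-1)
  have hcube : bRegSeries (ZMod 3) 4 * expand 3 three_ne_zero (thetaPhi (ZMod 3) (-1)) =
      thetaPsi (ZMod 3) (-1) * thetaPhi (ZMod 3) (-1) ^ 2 := by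
    rw [← pow_three_eq_expand, ← bRegSeries_four_mul_thetaPhi (ZMod 3) h2]
    ring
  have hdissect := dissect_thetaPsi_mul_thetaPhi_sq
  rw [← hcube, dissect_mul_expand three_ne_zero (by norm_num)] at hdissect
  rw [← pow_three_eq_expand] at hdissect ⊢
  refine mul_right_cancel₀ hne ?_
  linear_combination hdissect
    - thetaPsi (ZMod 3) (-1) * thetaPhi (ZMod 3) (-1) ^ 2 * thetaPsi_sq (ZMod 3) (-1)

/-! ### The quadratic form `3 * z ^ 2 + 2 * y ^ 2` -/

theorem three_dvd_bReg_four_or_exists (m : ℕ) :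
    3 ∣ bReg 4 (3 * m + 1) ∨ ∃ z y : ℤ, (8 * m + 3 : ℤ) = 3 * z ^ 2 + 2 * y ^ 2 := by
  have h := hasSum_smul_X_pow_mul (hasSum_expand (hasSum_thetaPsi (ZMod 3) (-1)) 3 three_ne_zero)
    (hasSum_thetaPhi (ZMod 3) (-1))
  rw [← dissect_bRegSeries_four] at h
  rw [or_iff_not_imp_right]
  intro hm
  have h0 := coeff_eq_zero_of_hasSum h (n := m) fun ⟨n, x⟩ hnx => hm ⟨4 * n - 1, 2 * x, by
    rw [← hnx]
    push_cast
    rw [natCast_hexagonal, sq_abs]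
    ring⟩
  simpa [bRegSeries, ZMod.natCast_eq_zero_iff] using h0

theorem eq_zero_of_mul_sq_add_mul_sq_eq_zero {K : Type*} [Field K] {a b z y : K}
    (hab : ¬ IsSquare (-(a * b))) (h : a * z ^ 2 + b * y ^ 2 = 0) : z = 0 ∧ y = 0 := by
  have ha : a ≠ 0 := by
    rintro rfl
    simp at hab
  obtain rfl : y = 0 := by
    by_contra hy
    exact hab ⟨a * z / y, by field_simp; linear_combination -h⟩
  simpa [ha] using h

theorem sq_dvd_of_dvd_mul_sq_add_mul_sq {p : ℕ} [Fact p.Prime] {a b z y : ℤ}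
    (hab : ¬ IsSquare ((-(a * b) : ℤ) : ZMod p)) (h : (p : ℤ) ∣ a * z ^ 2 + b * y ^ 2) :
    (p : ℤ) ^ 2 ∣ a * z ^ 2 + b * y ^ 2 := by
  have h' : (a : ZMod p) * z ^ 2 + b * y ^ 2 = 0 := by
    exact_mod_cast (ZMod.intCast_zmod_eq_zero_iff_dvd _ p).2 h
  obtain ⟨hz, hy⟩ := eq_zero_of_mul_sq_add_mul_sq_eq_zero (by exact_mod_cast hab) h'
  rw [ZMod.intCast_zmod_eq_zero_iff_dvd] at hz hy
  exact dvd_add ((pow_dvd_pow_of_dvd hz 2).mul_left a) ((pow_dvd_pow_of_dvd hy 2).mul_left b)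

theorem three_dvd_bReg_four {p m : ℕ} [Fact p.Prime] (hp : ¬ IsSquare ((-6 : ℤ) : ZMod p))
    (hdvd : p ∣ 8 * m + 3) (hsq : ¬ p ^ 2 ∣ 8 * m + 3) : 3 ∣ bReg 4 (3 * m + 1) := by
  refine (three_dvd_bReg_four_or_exists m).resolve_right ?_
  rintro ⟨z, y, h⟩
  have hdvd' : (p : ℤ) ∣ 3 * z ^ 2 + 2 * y ^ 2 := by
    rw [← h]
    exact_mod_cast hdvd
  have hsq' := sq_dvd_of_dvd_mul_sq_add_mul_sq hp hdvd'
  rw [← h] at hsq'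
  exact hsq (by exact_mod_cast hsq')

theorem not_isSquare_neg_six {l : ℕ}
    (hmod : l % 24 = 13 ∨ l % 24 = 17 ∨ l % 24 = 19 ∨ l % 24 = 23) :
    ¬ IsSquare ((-6 : ℤ) : ZMod l) := by
  apply ZMod.nonsquare_of_jacobiSym_eq_neg_one
  rw [jacobiSym.mod_right _ (Nat.odd_iff.2 (by lia)), show 4 * (-6 : ℤ).natAbs = 24 from rfl]
  rcases hmod with h | h | h | h <;> rw [h] <;> norm_num

/-- If `l ≡ 13,17,19,23 (mod 24)` is prime, then
`b_4(3l(ln+j) + (9l²-1)/8) ≡ 0 (mod 3)` for all `n` and `1 ≤ j ≤ l-1`. -/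
theorem b4_mod_three_family_two (l : ℕ) (hl : l.Prime)
    (hmod : l % 24 = 13 ∨ l % 24 = 17 ∨ l % 24 = 19 ∨ l % 24 = 23)
    (n j : ℕ) (hj1 : 1 ≤ j) (hj2 : j ≤ l - 1) :
    bReg 4 (3 * l * (l * n + j) + (9 * l ^ 2 - 1) / 8) % 3 = 0 := by
  have : Fact l.Prime := ⟨hl⟩
  have hodd : Odd l := Nat.odd_iff.2 (by lia)
  have hlj : ¬ l ∣ j := Nat.not_dvd_of_pos_of_lt hj1 (by lia)
  have hl8 : l.Coprime 8 := (hodd.coprime_two_right).pow_right 3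
  obtain ⟨q, hq⟩ := Nat.eight_dvd_sq_sub_one_of_odd hodd
  have hsq : l ^ 2 = 8 * q + 1 := by
    have := Nat.pow_pos (n := 2) hl.pos
    lia
  set m := l * (l * n + j) + 3 * q with hm
  have hindex : 3 * l * (l * n + j) + (9 * l ^ 2 - 1) / 8 = 3 * m + 1 := by
    rw [hm, mul_assoc]
    lia
  have hfactor : 8 * m + 3 = l * (8 * (l * n + j) + 3 * l) := by
    rw [hm]
    linear_combination 3 * hsq.symm
  rw [hindex]
  refine Nat.mod_eq_zero_of_dvd
    (three_dvd_bReg_four (not_isSquare_neg_six hmod) ⟨_, hfactor⟩ ?_)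
  rw [hfactor, sq, Nat.mul_dvd_mul_iff_left hl.pos, Nat.dvd_add_left (dvd_mul_left l 3),
    hl8.dvd_mul_left, Nat.dvd_add_right (dvd_mul_right l n)]
  exact hlj
end
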